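/- arXiv:2207.11758 — 2 statements merged into one kernel-verified Lean document; each statement's English description precedes it below -/
import Mathlib

section
/- For every integer k ≥ 1 there exists a constant C_k > 0 (depending only on k) such that for all integers x ≥ 1 and H ≥ 1, the Steinhaus expectation at level y = x + H satisfies | 𝔼_f |H^{-1/2} ∑_{x < n ≤ x+H} f(n)|^{2k} − k! | ≤ C_k · ( H^{-1} + H^{1/2} / max(x,H)^{1/2} + H · (log x + log H)^{2k²+2} / max(x,H) ), where the sum is over integers n with x < n ≤ x+H and log denotes the natural logarithm. -/
open MeasureTheory

/-- The Steinhaus probability space at level `y`: a uniform random point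
`ω p ∈ [0,1]` for each coordinate `p ≤ y` (only the prime coordinates are used);
the random multiplicative function has `f(p) = e^{2πi ω(p)}`, which is uniformly
distributed on the unit circle, independently over primes `p ≤ y`. -/
noncomputable def steinhausMeasure (y : ℕ) : Measure (Fin (y + 1) → ℝ) :=
  Measure.pi fun _ => volume.restrict (Set.Ioc (0 : ℝ) 1)

/-- The Steinhaus random completely multiplicative function at level `y`:
`f_ω(n) = ∏_{p ≤ y prime} e^{2πi ω(p) v_p(n)}`. -/
noncomputable def steinhausF (y : ℕ) (ω : Fin (y + 1) → ℝ) (n : ℕ) : ℂ :=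
  ∏ p ∈ (Finset.range (y + 1)).attach,
    if Nat.Prime (p : ℕ) then
      Complex.exp
        (((2 * Real.pi * ω ⟨(p : ℕ), Finset.mem_range.mp p.2⟩ *
            (padicValNat (p : ℕ) n : ℝ) : ℝ) : ℂ) * Complex.I)
    else 1

/-!
By orthogonality of the characters `n ↦ f(n)`, the `2k`-th moment of the sum is `H ^ (-k)` times
the number of pairs of `k`-tuples in `(x, x + H]` with equal products. Pairs of permuted tuples
account for `k! H ^ k + O(H ^ (k - 1))`, and cancelling common entries from any other pair leaves a
pair of tuples without a common entry, so it remains to count such disjoint pairs.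

Two tuples `m`, `n` with equal products have a common refinement, a `k × k` integer matrix `g` with
row products `mᵢ` and column products `nⱼ`. Since `∏ 1 / gᵢⱼ ≍ x ^ (-k)`, the number of pairs is at
most about `x ^ k` times the logarithmic mass of the matrices whose lines all have their product in
`(x, x + H]`. Solving a line condition for an entry that is at least `x / H` costs a factor
`O(H / x)` of mass, and `k + 1` such factors are needed. Suppose `x ^ k ≤ x H ^ k`; then every line
contains such a large entry, so the rows give `k` factors. If some large entry is not among those
chosen in the rows, its column gives one more. Otherwise the large entries form a permutation
matrix, and the remaining entries of the row and of the column through one of them have distinct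
but close products, which by Schur's test has mass `O(H / x)` up to logarithms.

If `x H ^ k ≤ x ^ k`, the divisor bound suffices: `m₁` factors as `∏ dⱼ` with `dⱼ ∣ nⱼ`, where
`dⱼ ∣ m₁ - nⱼ ≠ 0` forces `dⱼ ≤ H`, so that few tuples `n` are possible.
-/

open Finset

section Steinhaus

variable {y : ℕ} (ω : Fin (y + 1) → ℝ)

lemma steinhausF_eq_prod (n : ℕ) :
    steinhausF y ω n = ∏ p : Fin (y + 1), if Nat.Prime p then
      Complex.exp (((2 * Real.pi * ω p * padicValNat p n : ℝ) : ℂ) * Complex.I) else 1 :=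
  prod_bij' (fun p _ => ⟨p, mem_range.mp p.2⟩) (fun p _ => ⟨p, mem_range.mpr p.2⟩)
    (by simp) (by simp) (by simp) (by simp) (by simp)

lemma steinhausF_one : steinhausF y ω 1 = 1 := by
  simp [steinhausF_eq_prod]

lemma steinhausF_mul {a b : ℕ} (ha : a ≠ 0) (hb : b ≠ 0) :
    steinhausF y ω (a * b) = steinhausF y ω a * steinhausF y ω b := by
  simp_rw [steinhausF_eq_prod, ← prod_mul_distrib]
  refine prod_congr rfl fun p _ => ?_
  split_ifs with hp
  · have : Fact (Nat.Prime p) := ⟨hp⟩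
    rw [padicValNat.mul ha hb, ← Complex.exp_add]
    push_cast
    ring_nf
  · rw [mul_one]

lemma steinhausF_prod {ι : Type*} (s : Finset ι) {m : ι → ℕ} (hm : ∀ i ∈ s, m i ≠ 0) :
    steinhausF y ω (∏ i ∈ s, m i) = ∏ i ∈ s, steinhausF y ω (m i) := by
  induction s using Finset.cons_induction with
  | empty => exact steinhausF_one ω
  | cons a s ha ih =>
    rw [forall_mem_cons] at hm
    rw [prod_cons, prod_cons, steinhausF_mul ω hm.1 (prod_ne_zero_iff.mpr hm.2), ih hm.2]

lemma norm_steinhausF (n : ℕ) : ‖steinhausF y ω n‖ = 1 := by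
  rw [steinhausF_eq_prod, norm_prod]
  refine prod_eq_one fun p _ => ?_
  split_ifs
  · exact Complex.norm_exp_ofReal_mul_I _
  · exact norm_one

lemma continuous_steinhausF (y n : ℕ) : Continuous fun ω => steinhausF y ω n := by
  simp_rw [steinhausF_eq_prod]
  refine continuous_finsetProd _ fun p _ => ?_
  split_ifs <;> fun_prop

lemma steinhausF_mul_conj (a b : ℕ) :
    steinhausF y ω a * (starRingEnd ℂ) (steinhausF y ω b) =
      ∏ p : Fin (y + 1), if Nat.Prime p then
        Complex.exp (2 * Real.pi * ((padicValNat p a - padicValNat p b : ℤ) : ℂ) *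
          Complex.I * ω p) else 1 := by
  simp_rw [steinhausF_eq_prod, map_prod, ← prod_mul_distrib]
  refine prod_congr rfl fun p _ => ?_
  split_ifs
  · rw [← Complex.exp_conj, ← Complex.exp_add, map_mul, Complex.conj_ofReal, Complex.conj_I]
    simp only [Complex.ofReal_mul, Complex.ofReal_ofNat, Complex.ofReal_natCast, Int.cast_sub,
      Int.cast_natCast]
    ring_nf
  · rw [map_one, mul_one]

lemma integral_exp_two_pi_mul_int (d : ℤ) :
    ∫ t in Set.Ioc (0 : ℝ) 1, Complex.exp (2 * Real.pi * d * Complex.I * t) =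
      if d = 0 then 1 else 0 := by
  rw [← intervalIntegral.integral_of_le zero_le_one]
  split_ifs with hd
  · simp [hd]
  · have exp_one_period : Complex.exp (2 * Real.pi * d * Complex.I * (1 : ℝ)) = 1 :=
      Complex.exp_eq_one_iff.mpr ⟨d, by push_cast; ring⟩
    rw [integral_exp_mul_complex (by simp [hd, Real.pi_ne_zero]), exp_one_period]
    simp

lemma eq_iff_padicValNat_eq_of_mem_smoothNumbers {N a b : ℕ} (ha : a ∈ Nat.smoothNumbers N)
    (hb : b ∈ Nat.smoothNumbers N) :
    a = b ↔ ∀ p : Fin N, Nat.Prime p → padicValNat p a = padicValNat p b := by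
  refine ⟨fun h p _ => h ▸ rfl, fun h => Nat.eq_of_factorization_eq
    (Nat.ne_zero_of_mem_smoothNumbers ha) (Nat.ne_zero_of_mem_smoothNumbers hb) fun p => ?_⟩
  by_cases hp : p.Prime
  · rcases lt_or_ge p N with hpN | hpN
    · simpa only [Nat.factorization_def _ hp] using h ⟨p, hpN⟩ hp
    · rw [Nat.factorization_eq_zero_of_not_dvd
          fun hd => hpN.not_gt (Nat.mem_smoothNumbers'.mp ha p hp hd),
        Nat.factorization_eq_zero_of_not_dvd
          fun hd => hpN.not_gt (Nat.mem_smoothNumbers'.mp hb p hp hd)]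
  · rw [Nat.factorization_eq_zero_of_not_prime _ hp, Nat.factorization_eq_zero_of_not_prime _ hp]

lemma integral_steinhausF_mul_conj {a b : ℕ} (ha : a ∈ Nat.smoothNumbers (y + 1))
    (hb : b ∈ Nat.smoothNumbers (y + 1)) :
    ∫ ω, steinhausF y ω a * (starRingEnd ℂ) (steinhausF y ω b) ∂(steinhausMeasure y) =
      if a = b then 1 else 0 := by
  have integral_coord (p : Fin (y + 1)) : ∫ t in Set.Ioc (0 : ℝ) 1, (if Nat.Prime p then
      Complex.exp (2 * Real.pi * ((padicValNat p a - padicValNat p b : ℤ) : ℂ) *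
        Complex.I * t) else 1) =
      if Nat.Prime p → padicValNat p a = padicValNat p b then 1 else 0 := by
    by_cases hp : Nat.Prime p
    · simp only [hp, if_true, true_imp_iff, integral_exp_two_pi_mul_int, sub_eq_zero,
        Nat.cast_inj]
    · simp [hp]
  simp_rw [steinhausF_mul_conj, steinhausMeasure]
  rw [integral_fintype_prod_eq_prod (𝕜 := ℂ) fun (p : Fin (y + 1)) (t : ℝ) =>
    if Nat.Prime p then Complex.exp (2 * Real.pi *
      ((padicValNat p a - padicValNat p b : ℤ) : ℂ) * Complex.I * t) else 1]
  simp_rw [integral_coord, prod_ite_zero, prod_const_one, mem_univ, true_imp_iff,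
    eq_iff_padicValNat_eq_of_mem_smoothNumbers ha hb]

instance (y : ℕ) : IsFiniteMeasure (steinhausMeasure y) := by
  unfold steinhausMeasure
  infer_instance

lemma integrable_steinhausF_mul_conj (y a b : ℕ) :
    Integrable (fun ω => steinhausF y ω a * (starRingEnd ℂ) (steinhausF y ω b))
      (steinhausMeasure y) :=
  .of_bound ((continuous_steinhausF y a).mul
    (Complex.continuous_conj.comp (continuous_steinhausF y b))).aestronglyMeasurable 1
    (.of_forall fun ω => by
      rw [norm_mul, RCLike.norm_conj, norm_steinhausF, norm_steinhausF, one_mul])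

lemma integral_norm_sum_steinhausF_sq {κ : Type*} (T : Finset κ) {φ : κ → ℕ}
    (hφ : ∀ m ∈ T, φ m ∈ Nat.smoothNumbers (y + 1)) :
    ∫ ω, ‖∑ m ∈ T, steinhausF y ω (φ m)‖ ^ 2 ∂(steinhausMeasure y) =
      #{q ∈ T ×ˢ T | φ q.1 = φ q.2} := by
  apply Complex.ofReal_injective
  rw [← integral_complex_ofReal]
  simp_rw [Complex.ofReal_pow, ← Complex.mul_conj', map_sum, sum_mul_sum, ← sum_product']
  rw [integral_finsetSum _ fun q _ => integrable_steinhausF_mul_conj y _ _]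
  rw [Complex.ofReal_natCast, ← sum_boole]
  exact sum_congr rfl fun q hq =>
    integral_steinhausF_mul_conj (hφ _ (mem_product.mp hq).1) (hφ _ (mem_product.mp hq).2)

end Steinhaus

section EqualProducts

variable {M : Type*} [CommMonoid M] [DecidableEq M]

/-- The pairs of `k`-tuples of elements of `A` with equal products: the solutions of
`m₁ ⋯ mₖ = n₁ ⋯ nₖ`, which the `2k`-th moment of a Steinhaus sum over `A` counts. -/
def equalProductPairs (k : ℕ) (A : Finset M) : Finset ((Fin k → M) × (Fin k → M)) :=
  {q ∈ (Fintype.piFinset fun _ => A) ×ˢ (Fintype.piFinset fun _ => A) |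
    ∏ i, q.1 i = ∏ i, q.2 i}

lemma mem_equalProductPairs {k : ℕ} {A : Finset M} {q : (Fin k → M) × (Fin k → M)} :
    q ∈ equalProductPairs k A ↔
      ((∀ i, q.1 i ∈ A) ∧ ∀ i, q.2 i ∈ A) ∧ ∏ i, q.1 i = ∏ i, q.2 i := by
  simp only [equalProductPairs, mem_filter, mem_product, Fintype.mem_piFinset]

lemma equalProductPairs_mono (k : ℕ) {A B : Finset M} (h : A ⊆ B) :
    equalProductPairs k A ⊆ equalProductPairs k B := fun q hq => by
  rw [mem_equalProductPairs] at hq ⊢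
  exact ⟨⟨fun i => h (hq.1.1 i), fun i => h (hq.1.2 i)⟩, hq.2⟩

end EqualProducts

lemma integral_norm_sum_steinhausF_pow {y : ℕ} (k : ℕ) {A : Finset ℕ}
    (hA : ∀ n ∈ A, n ∈ Nat.smoothNumbers (y + 1)) :
    ∫ ω, ‖∑ n ∈ A, steinhausF y ω n‖ ^ (2 * k) ∂(steinhausMeasure y) =
      #(equalProductPairs k A) := by
  have hmem {m : Fin k → ℕ} (hm : m ∈ Fintype.piFinset fun _ => A) (i : Fin k) :
      m i ∈ Nat.smoothNumbers (y + 1) := hA _ (Fintype.mem_piFinset.mp hm i)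
  have sum_pow_eq (ω : Fin (y + 1) → ℝ) : (∑ n ∈ A, steinhausF y ω n) ^ k =
      ∑ m ∈ Fintype.piFinset fun _ : Fin k => A, steinhausF y ω (∏ i, m i) := by
    rw [sum_pow']
    exact sum_congr rfl fun m hm => (steinhausF_prod ω _ fun i _ =>
      Nat.ne_zero_of_mem_smoothNumbers (hmem hm i)).symm
  simp_rw [mul_comm 2 k, pow_mul _ k 2, ← norm_pow _ k, sum_pow_eq]
  exact integral_norm_sum_steinhausF_sq _ fun m hm => prod_induction _
    (· ∈ Nat.smoothNumbers (y + 1)) (fun _ _ => Nat.mul_mem_smoothNumbers)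
    (Nat.mem_smoothNumbers'.mpr fun p hp h => (hp.one_lt.ne' (Nat.dvd_one.mp h)).elim)
    fun i _ => hmem hm i

lemma integral_norm_inv_sqrt_mul_sum_steinhausF_pow (k x H : ℕ) :
    ∫ ω, ‖((Real.sqrt H : ℂ))⁻¹ * ∑ n ∈ Ioc x (x + H), steinhausF (x + H) ω n‖ ^ (2 * k)
        ∂(steinhausMeasure (x + H)) =
      #(equalProductPairs k (Ioc x (x + H))) / (H : ℝ) ^ k := by
  have norm_scale : ‖((Real.sqrt H : ℂ))⁻¹‖ ^ (2 * k) = ((H : ℝ) ^ k)⁻¹ := by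
    rw [norm_inv, Complex.norm_real, Real.norm_of_nonneg (Real.sqrt_nonneg _), inv_pow, pow_mul,
      Real.sq_sqrt (Nat.cast_nonneg _)]
  simp_rw [norm_mul, mul_pow, norm_scale]
  rw [integral_const_mul, integral_norm_sum_steinhausF_pow k, div_eq_inv_mul]
  intro n hn
  rw [mem_Ioc] at hn
  exact Nat.mem_smoothNumbers_of_lt (by lia) (by lia)

section TrivialSolutions

variable {M : Type*}

/-- The pairs of `k`-tuples of elements of `A` in which the second tuple permutes the first. They
are the trivial solutions of `m₁ ⋯ mₖ = n₁ ⋯ nₖ`, and give the Gaussian moment `k!`. -/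
noncomputable def permPairs (k : ℕ) (A : Finset M) : Finset ((Fin k → M) × (Fin k → M)) :=
  open scoped Classical in
  {q ∈ (Fintype.piFinset fun _ => A) ×ˢ (Fintype.piFinset fun _ => A) |
    ∃ σ : Equiv.Perm (Fin k), q.2 = q.1 ∘ σ}

lemma mem_permPairs {k : ℕ} {A : Finset M} {q : (Fin k → M) × (Fin k → M)} :
    q ∈ permPairs k A ↔
      ((∀ i, q.1 i ∈ A) ∧ ∀ i, q.2 i ∈ A) ∧ ∃ σ : Equiv.Perm (Fin k), q.2 = q.1 ∘ σ := by
  simp only [permPairs, mem_filter, mem_product, Fintype.mem_piFinset]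

lemma card_permPairs_le (k : ℕ) (A : Finset M) : #(permPairs k A) ≤ k.factorial * #A ^ k := by
  classical
  have hsub : permPairs k A ⊆ ((Fintype.piFinset fun _ : Fin k => A) ×ˢ
      (univ : Finset (Equiv.Perm (Fin k)))).image fun z => (z.1, z.1 ∘ z.2) := by
    intro q hq
    obtain ⟨⟨hA, -⟩, σ, hσ⟩ := mem_permPairs.mp hq
    exact mem_image.mpr ⟨(q.1, σ), by simpa using hA, Prod.ext rfl hσ.symm⟩
  refine ((card_le_card hsub).trans card_image_le).trans_eq ?_
  rw [card_product, Fintype.card_piFinset_const, card_univ, Fintype.card_perm, Fintype.card_fin,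
    mul_comm]

/-- A pair of an injective tuple and a permutation is determined by its image in `permPairs`. -/
lemma le_card_permPairs (k : ℕ) (A : Finset M) :
    k.factorial * (#A).descFactorial k ≤ #(permPairs k A) := by
  classical
  let Ψ : (Fin k ↪ A) × Equiv.Perm (Fin k) → (Fin k → M) × (Fin k → M) :=
    fun z => (fun i => z.1 i, fun i => z.1 (z.2 i))
  have hinj : Function.Injective Ψ := by
    rintro ⟨e, σ⟩ ⟨e', σ'⟩ h
    obtain ⟨h1, h2⟩ := Prod.ext_iff.mp h
    obtain rfl : e = e' := by
      ext i
      exact congrFun h1 i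
    exact Prod.ext rfl (Equiv.ext fun i => e.injective (Subtype.ext (congrFun h2 i)))
  have hcard : #(univ.image Ψ) = k.factorial * (#A).descFactorial k := by
    rw [card_image_of_injective _ hinj, card_univ, Fintype.card_prod, Fintype.card_embedding_eq,
      Fintype.card_perm, Fintype.card_coe, Fintype.card_fin, mul_comm]
  rw [← hcard]
  refine card_le_card (image_subset_iff.mpr fun z _ => ?_)
  exact mem_permPairs.mpr ⟨⟨fun i => (z.1 i).2, fun i => (z.1 (z.2 i)).2⟩, z.2, rfl⟩

lemma exists_perm_of_succAbove {k : ℕ} {m n : Fin (k + 1) → M} {i j : Fin (k + 1)}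
    (hij : m i = n j) {σ : Equiv.Perm (Fin k)} (h : j.removeNth n = i.removeNth m ∘ σ) :
    ∃ τ : Equiv.Perm (Fin (k + 1)), n = m ∘ τ := by
  refine ⟨(finSuccEquiv' j).trans ((Equiv.optionCongr σ).trans (finSuccEquiv' i).symm), ?_⟩
  ext l
  rcases Fin.eq_self_or_eq_succAbove j l with rfl | ⟨l, rfl⟩
  · simp [hij]
  · simpa [Fin.removeNth] using congrFun h l

variable [DecidableEq M]

section CommMonoid

variable [CommMonoid M]

/-- The pairs of `k`-tuples of elements of `A` with equal products that are not permutations of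
each other: the off-diagonal solutions, whose number is the error term in the moment. -/
noncomputable def nonPermPairs (k : ℕ) (A : Finset M) : Finset ((Fin k → M) × (Fin k → M)) :=
  open scoped Classical in equalProductPairs k A \ permPairs k A

/-- The pairs of `k`-tuples of elements of `A` with equal products and no common entry. Every
non-permutation pair becomes one of these by cancelling common entries. -/
def disjointPairs (k : ℕ) (A : Finset M) : Finset ((Fin k → M) × (Fin k → M)) :=
  {q ∈ equalProductPairs k A | ∀ i j, q.1 i ≠ q.2 j}

lemma permPairs_subset_equalProductPairs (k : ℕ) (A : Finset M) :
    permPairs k A ⊆ equalProductPairs k A := by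
  intro q hq
  obtain ⟨hA, σ, hσ⟩ := mem_permPairs.mp hq
  exact mem_equalProductPairs.mpr ⟨hA, by rw [hσ]; exact (Equiv.prod_comp σ q.1).symm⟩

lemma card_nonPermPairs_add_card_permPairs (k : ℕ) (A : Finset M) :
    #(nonPermPairs k A) + #(permPairs k A) = #(equalProductPairs k A) := by
  classical
  exact card_sdiff_add_card_eq_card (permPairs_subset_equalProductPairs k A)

lemma mem_nonPermPairs {k : ℕ} {A : Finset M} {q : (Fin k → M) × (Fin k → M)} :
    q ∈ nonPermPairs k A ↔
      q ∈ equalProductPairs k A ∧ ¬ ∃ σ : Equiv.Perm (Fin k), q.2 = q.1 ∘ σ := by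
  classical
  rw [nonPermPairs, mem_sdiff, and_congr_right_iff]
  exact fun hq => not_congr (mem_permPairs.trans
    (and_iff_right (mem_equalProductPairs.mp hq).1))

lemma nonPermPairs_zero (A : Finset M) : nonPermPairs 0 A = ∅ := by
  refine eq_empty_of_forall_notMem fun q hq => (mem_nonPermPairs.mp hq).2 ⟨1, ?_⟩
  exact Subsingleton.elim _ _

end CommMonoid

variable [CommMonoidWithZero M] [IsCancelMulZero M]

lemma removeNth_mem_nonPermPairs {k : ℕ} {A : Finset M} (hA : 0 ∉ A)
    {m n : Fin (k + 1) → M} (hq : (m, n) ∈ nonPermPairs (k + 1) A) {i j : Fin (k + 1)}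
    (hij : m i = n j) : (i.removeNth m, j.removeNth n) ∈ nonPermPairs k A := by
  obtain ⟨heq, hperm⟩ := mem_nonPermPairs.mp hq
  obtain ⟨⟨hm, hn⟩, hprod⟩ := mem_equalProductPairs.mp heq
  refine mem_nonPermPairs.mpr ⟨mem_equalProductPairs.mpr
    ⟨⟨fun _ => hm _, fun _ => hn _⟩, ?_⟩, fun ⟨σ, h⟩ => hperm (exists_perm_of_succAbove hij h)⟩
  simp only at hprod
  rw [Fin.prod_univ_succAbove m i, Fin.prod_univ_succAbove n j, ← hij] at hprod
  exact mul_left_cancel₀ (ne_of_mem_of_not_mem (hm i) hA) hprod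

lemma card_nonPermPairs_succ_le (k : ℕ) {A : Finset M} (hA : 0 ∉ A) :
    #(nonPermPairs (k + 1) A) ≤
      #(disjointPairs (k + 1) A) + (k + 1) ^ 2 * (#A * #(nonPermPairs k A)) := by
  have hsub : nonPermPairs (k + 1) A ⊆ disjointPairs (k + 1) A ∪
      (univ : Finset (Fin (k + 1) × Fin (k + 1))).biUnion fun u =>
        (A ×ˢ nonPermPairs k A).image fun z =>
          (Fin.insertNth (α := fun _ => M) u.1 z.1 z.2.1,
            Fin.insertNth (α := fun _ => M) u.2 z.1 z.2.2) := by
    rintro ⟨m, n⟩ hq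
    have heq := (mem_nonPermPairs.mp hq).1
    by_cases hd : ∀ i j, m i ≠ n j
    · exact mem_union_left _ (mem_filter.mpr ⟨heq, hd⟩)
    push Not at hd
    obtain ⟨i, j, hij⟩ := hd
    refine mem_union_right _ (mem_biUnion.mpr ⟨(i, j), mem_univ _, mem_image.mpr
      ⟨(m i, i.removeNth m, j.removeNth n), mem_product.mpr
        ⟨(mem_equalProductPairs.mp heq).1.1 i, removeNth_mem_nonPermPairs hA hq hij⟩, ?_⟩⟩)
    rw [Fin.insertNth_self_removeNth, hij, Fin.insertNth_self_removeNth]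
  refine (card_le_card hsub).trans ((card_union_le _ _).trans ?_)
  gcongr
  calc _ ≤ ∑ _u : Fin (k + 1) × Fin (k + 1), #A * #(nonPermPairs k A) :=
        card_biUnion_le.trans (sum_le_sum fun _ _ => card_image_le.trans_eq (card_product _ _))
    _ = _ := by simp [sq]

end TrivialSolutions

section DiagonalTerm

lemma pow_mul_one_sub_le_descFactorial (k : ℕ) {n : ℕ} (hn : 1 ≤ n) :
    (n : ℝ) ^ k * (1 - k ^ 2 / n) ≤ n.descFactorial k := by
  have hn0 : (0 : ℝ) < n := by exact_mod_cast hn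
  rcases le_or_gt k n with hk | hk
  · have hkn : (k : ℝ) / n ≤ 1 := (div_le_one hn0).mpr (by exact_mod_cast hk)
    calc (n : ℝ) ^ k * (1 - k ^ 2 / n) = n ^ k * (1 + k * -(k / n : ℝ)) := by ring
      _ ≤ n ^ k * (1 + -(k / n : ℝ)) ^ k := by
        gcongr
        exact one_add_mul_le_pow (by linarith) k
      _ = ((n - k : ℕ) : ℝ) ^ k := by
        rw [← mul_pow, Nat.cast_sub hk]
        field_simp
        ring
      _ ≤ n.descFactorial k := by
        exact_mod_cast (Nat.pow_le_pow_left (by lia) k).trans (Nat.pow_sub_le_descFactorial n k)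
  · have one_le : (1 : ℝ) ≤ k ^ 2 / n := by
      rw [one_le_div hn0]
      exact_mod_cast hk.le.trans (Nat.le_self_pow two_ne_zero k)
    exact (mul_nonpos_of_nonneg_of_nonpos (by positivity) (by linarith)).trans (Nat.cast_nonneg _)

lemma abs_card_equalProductPairs_div_sub_factorial_le {M : Type*} [CommMonoid M] [DecidableEq M]
    (k : ℕ) {A : Finset M} (hA : A.Nonempty) :
    |(#(equalProductPairs k A) : ℝ) / (#A : ℝ) ^ k - k.factorial| ≤
      k.factorial * k ^ 2 * (#A : ℝ)⁻¹ + #(nonPermPairs k A) / (#A : ℝ) ^ k := by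
  have hpow : (0 : ℝ) < (#A : ℝ) ^ k := by have := hA.card_pos; positivity
  have hsplit : (#(equalProductPairs k A) : ℝ) = #(nonPermPairs k A) + #(permPairs k A) := by
    exact_mod_cast (card_nonPermPairs_add_card_permPairs k A).symm
  have hupper : (#(permPairs k A) : ℝ) / (#A : ℝ) ^ k ≤ k.factorial :=
    (div_le_iff₀ hpow).mpr (by exact_mod_cast card_permPairs_le k A)
  have hlower : k.factorial * (1 - k ^ 2 / #A : ℝ) ≤ (#(permPairs k A) : ℝ) / (#A : ℝ) ^ k := by
    rw [le_div_iff₀ hpow]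
    calc k.factorial * (1 - k ^ 2 / #A : ℝ) * (#A : ℝ) ^ k
        = k.factorial * ((#A : ℝ) ^ k * (1 - k ^ 2 / #A)) := by ring
      _ ≤ k.factorial * ((#A).descFactorial k : ℝ) := by
        gcongr
        exact pow_mul_one_sub_le_descFactorial k hA.card_pos
      _ ≤ #(permPairs k A) := by exact_mod_cast le_card_permPairs k A
  have hnn : 0 ≤ (#(nonPermPairs k A) : ℝ) / (#A : ℝ) ^ k := by positivity
  have hfac : 0 ≤ k.factorial * k ^ 2 * (#A : ℝ)⁻¹ := by positivity
  rw [hsplit, add_div, abs_le]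
  constructor
  · linear_combination hlower + 2 * hnn
  · linear_combination hupper + hfac

end DiagonalTerm

section Refinement

variable {M ι κ : Type*}

lemma exists_prod_dvd_of_dvd_prod [CommMonoid M] [DecompositionMonoid M] [Subsingleton Mˣ]
    (s : Finset ι) (b : ι → M) {a : M} (h : a ∣ ∏ j ∈ s, b j) :
    ∃ d : ι → M, (∀ j ∈ s, d j ∣ b j) ∧ ∏ j ∈ s, d j = a := by
  classical
  induction s using Finset.induction_on generalizing a with
  | empty => exact ⟨1, by simp, (isUnit_iff_eq_one.mp (isUnit_of_dvd_one h)).symm⟩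
  | insert j s hj ih =>
    rw [prod_insert hj] at h
    obtain ⟨a₁, a₂, h₁, h₂, rfl⟩ := exists_dvd_and_dvd_of_dvd_mul h
    obtain ⟨d, hdvd, hprod⟩ := ih h₂
    refine ⟨Function.update d j a₁, forall_mem_insert _ _ _ |>.mpr ⟨?_, fun i hi => ?_⟩, ?_⟩
    · rwa [Function.update_self]
    · rw [Function.update_of_ne (ne_of_mem_of_not_mem hi hj)]
      exact hdvd i hi
    · rw [prod_insert hj, prod_update_of_notMem hj, hprod, Function.update_self]

lemma exists_common_refinement_of_prod_eq [CommMonoidWithZero M] [IsCancelMulZero M]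
    [DecompositionMonoid M] [Subsingleton Mˣ] [Fintype ι] (s : Finset κ) {a : κ → M} {b : ι → M}
    (ha : ∀ i ∈ s, a i ≠ 0) (h : ∏ i ∈ s, a i = ∏ j, b j) :
    ∃ g : κ → ι → M, (∀ i ∈ s, ∏ j, g i j = a i) ∧ ∀ j, ∏ i ∈ s, g i j = b j := by
  classical
  induction s using Finset.induction_on generalizing b with
  | empty =>
    refine ⟨1, by simp, fun j => ?_⟩
    rw [prod_empty] at h ⊢
    exact (isUnit_iff_eq_one.mp (isUnit_of_dvd_one (h ▸ dvd_prod_of_mem b (mem_univ j)))).symm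
  | insert i s hi ih =>
    rw [forall_mem_insert] at ha
    rw [prod_insert hi] at h
    obtain ⟨d, hdvd, hprod⟩ := exists_prod_dvd_of_dvd_prod univ b (h ▸ dvd_mul_right _ _)
    choose c hc using fun j => hdvd j (mem_univ j)
    have hcancel : ∏ j ∈ s, a j = ∏ j, c j :=
      mul_left_cancel₀ ha.1 (h.trans (by simp_rw [hc, prod_mul_distrib, hprod]))
    obtain ⟨g, hrow, hcol⟩ := ih ha.2 hcancel
    refine ⟨Function.update g i d, (forall_mem_insert _ _ _).mpr ⟨?_, fun j hj => ?_⟩, fun j => ?_⟩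
    · rw [Function.update_self, hprod]
    · rw [Function.update_of_ne (ne_of_mem_of_not_mem hj hi), hrow j hj]
    · rw [prod_insert hi, Function.update_self, hc, ← hcol]
      congr 1
      exact prod_congr rfl fun l hl => by
        rw [Function.update_of_ne (ne_of_mem_of_not_mem hl hi)]

end Refinement

section LogMass

variable {ι κ : Type*} [Fintype ι] [Fintype κ] {N : ℕ}

/-- The logarithmic weight `∏ 1 / gᵢ` of an integer tuple. -/
noncomputable def logWeight (g : ι → ℕ) : ℝ := ∏ i, (g i : ℝ)⁻¹

lemma logWeight_nonneg (g : ι → ℕ) : 0 ≤ logWeight g :=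
  prod_nonneg fun _ _ => by positivity

lemma logWeight_eq_inv (g : ι → ℕ) : logWeight g = ((∏ i, g i : ℕ) : ℝ)⁻¹ := by
  rw [logWeight, prod_inv_distrib, Nat.cast_prod]

variable [DecidableEq ι] [DecidableEq κ]

/-- The tuples indexed by `ι` with entries in `[1, N]`. -/
def tupleBox (ι : Type*) [Fintype ι] [DecidableEq ι] (N : ℕ) : Finset (ι → ℕ) :=
  Fintype.piFinset fun _ => Icc 1 N

/-- The total logarithmic weight of the tuples in `[1, N]^ι` satisfying `p`: up to the factor
`harmonic N ^ |ι|`, the probability of `p` when the entries are independent and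
logarithmically distributed. -/
noncomputable def logMass (N : ℕ) (p : (ι → ℕ) → Prop) : ℝ :=
  open scoped Classical in ∑ g ∈ tupleBox ι N with p g, logWeight g

lemma mem_tupleBox {g : ι → ℕ} : g ∈ tupleBox ι N ↔ ∀ i, g i ∈ Icc 1 N :=
  Fintype.mem_piFinset

lemma cast_harmonic (N : ℕ) : (harmonic N : ℝ) = ∑ t ∈ Icc 1 N, (t : ℝ)⁻¹ := by
  rw [harmonic_eq_sum_Icc]
  push_cast
  rfl

lemma one_le_harmonic (hN : 1 ≤ N) : (1 : ℝ) ≤ harmonic N := by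
  rw [cast_harmonic]
  simpa using single_le_sum (f := fun t : ℕ => (t : ℝ)⁻¹) (fun _ _ => by positivity)
    (mem_Icc.mpr ⟨le_rfl, hN⟩)

lemma sum_logWeight (N : ℕ) :
    ∑ g ∈ tupleBox ι N, logWeight g = (harmonic N : ℝ) ^ Fintype.card ι := by
  rw [cast_harmonic, ← card_univ, ← prod_const]
  exact sum_prod_piFinset (Icc 1 N) fun _ t => (t : ℝ)⁻¹

lemma logMass_true (N : ℕ) :
    logMass N (fun _ : ι → ℕ => True) = (harmonic N : ℝ) ^ Fintype.card ι := by
  rw [logMass, filter_true, sum_logWeight]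

lemma logMass_nonneg (p : (ι → ℕ) → Prop) : 0 ≤ logMass N p :=
  sum_nonneg fun _ _ => logWeight_nonneg _

lemma logMass_mono {p q : (ι → ℕ) → Prop} (h : ∀ g ∈ tupleBox ι N, p g → q g) :
    logMass N p ≤ logMass N q := by
  classical
  refine sum_le_sum_of_subset_of_nonneg (fun g hg => ?_) fun _ _ _ => logWeight_nonneg _
  rw [mem_filter] at hg ⊢
  exact ⟨hg.1, h g hg.1 hg.2⟩

lemma logMass_const_and_le {c : Prop} {p : (ι → ℕ) → Prop} {B : ℝ} (hB : 0 ≤ B)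
    (h : c → logMass N p ≤ B) : logMass N (fun g => c ∧ p g) ≤ B := by
  by_cases hc : c
  · simpa only [hc, true_and] using h hc
  · simpa only [hc, false_and, logMass, filter_false, sum_empty] using hB

lemma logMass_exists_le {α : Type*} [Fintype α] (p : α → (ι → ℕ) → Prop) :
    logMass N (fun g => ∃ a, p a g) ≤ ∑ a, logMass N (p a) := by
  classical
  simp only [logMass, sum_filter]
  rw [sum_comm]
  refine sum_le_sum fun g _ => ?_
  have term_nonneg (a : α) (_ : a ∈ univ) : 0 ≤ if p a g then logWeight g else 0 :=
    ite_nonneg (logWeight_nonneg g) le_rfl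
  split_ifs with h
  · obtain ⟨a, ha⟩ := h
    simpa only [ha, if_true] using single_le_sum term_nonneg (mem_univ a)
  · exact sum_nonneg term_nonneg

lemma update_mem_tupleBox {g : ι → ℕ} (hg : g ∈ tupleBox ι N) (v : ι) {t : ℕ}
    (ht : t ∈ Icc 1 N) : Function.update g v t ∈ tupleBox ι N := by
  rw [mem_tupleBox] at hg ⊢
  intro i
  rcases eq_or_ne i v with rfl | hi
  · rwa [Function.update_self]
  · rw [Function.update_of_ne hi]
    exact hg i

lemma logWeight_update_mul (g : ι → ℕ) (v : ι) (t : ℕ) :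
    logWeight (Function.update g v t) * (g v : ℝ)⁻¹ = logWeight g * (t : ℝ)⁻¹ := by
  simp only [logWeight_eq_inv, prod_update_of_mem (mem_univ v),
    prod_eq_mul_prod_sdiff_singleton_of_mem (mem_univ v) g]
  push_cast
  ring

/-- Resampling the coordinate `v` is the involution `(g, t) ↦ (update g v t, g v)`. -/
lemma harmonic_mul_logMass (v : ι) (p : (ι → ℕ) → Prop) [DecidablePred p] :
    harmonic N * logMass N p = ∑ g ∈ tupleBox ι N, logWeight g *
      ∑ t ∈ Icc 1 N with p (Function.update g v t), (t : ℝ)⁻¹ := by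
  have swap_mem (q : (ι → ℕ) × ℕ) (hq : q ∈ tupleBox ι N ×ˢ Icc 1 N) :
      (Function.update q.1 v q.2, q.1 v) ∈ tupleBox ι N ×ˢ Icc 1 N := by
    rw [mem_product] at hq ⊢
    exact ⟨update_mem_tupleBox hq.1 v hq.2, mem_tupleBox.mp hq.1 v⟩
  simp_rw [mul_sum, sum_filter, ← sum_product']
  rw [mul_comm, logMass, sum_filter, cast_harmonic, sum_mul_sum, ← sum_product']
  refine sum_bij' (fun q _ => (Function.update q.1 v q.2, q.1 v))
    (fun q _ => (Function.update q.1 v q.2, q.1 v)) swap_mem swap_mem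
    (by simp) (by simp) fun q _ => ?_
  simp only [Function.update_idem, Function.update_eq_self, logWeight_update_mul]
  split_ifs
  · rfl
  · rw [zero_mul]

/-- If `P` restricts the coordinate `v` to a set of logarithmic mass at most `B` and `G` does not
depend on `v`, imposing `P` on top of `G` costs a factor `B`. -/
lemma logMass_and_le (hN : 1 ≤ N) {v : ι} {G P : (ι → ℕ) → Prop} [DecidablePred P] {B : ℝ}
    (hG : DependsOn G {v}ᶜ)
    (hP : ∀ g ∈ tupleBox ι N, ∑ t ∈ Icc 1 N with P (Function.update g v t), (t : ℝ)⁻¹ ≤ B) :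
    logMass N (fun g => G g ∧ P g) ≤ B * logMass N G := by
  classical
  have hG_update (g : ι → ℕ) (t : ℕ) : G (Function.update g v t) = G g :=
    hG fun i hi => Function.update_of_ne hi _ _
  refine (le_mul_of_one_le_left (logMass_nonneg _) (one_le_harmonic hN)).trans ?_
  rw [harmonic_mul_logMass v, logMass, mul_sum, sum_filter]
  refine sum_le_sum fun g hg => ?_
  simp only [hG_update]
  split_ifs with h
  · simp only [h, true_and]
    rw [mul_comm]
    exact mul_le_mul_of_nonneg_right (hP g hg) (logWeight_nonneg g)
  · simp [h]

lemma logMass_and_forall_le {α : Type*} (hN : 1 ≤ N) (s : Finset α) {v : α → ι}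
    {G : (ι → ℕ) → Prop} {P : α → (ι → ℕ) → Prop} [∀ a, DecidablePred (P a)] {B : ℝ} (hB : 0 ≤ B)
    (hG : ∀ a ∈ s, DependsOn G {v a}ᶜ)
    (hP : ∀ a ∈ s, ∀ b ∈ s, a ≠ b → DependsOn (P a) {v b}ᶜ)
    (hmass : ∀ a ∈ s, ∀ g ∈ tupleBox ι N,
      ∑ t ∈ Icc 1 N with P a (Function.update g (v a) t), (t : ℝ)⁻¹ ≤ B) :
    logMass N (fun g => G g ∧ ∀ a ∈ s, P a g) ≤ B ^ #s * logMass N G := by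
  induction s using Finset.cons_induction with
  | empty => simp
  | cons a s ha ih =>
    simp only [forall_mem_cons] at hG hP hmass
    have hind : DependsOn (fun g => G g ∧ ∀ b ∈ s, P b g) {v a}ᶜ := fun g g' h => by
      have hPeq (b) (hb : b ∈ s) : P b g = P b g' :=
        (hP.2 b hb).1 (ne_of_mem_of_not_mem hb ha) h
      simp only [hG.1 h, eq_iff_iff, and_congr_right_iff]
      exact fun _ => forall₂_congr fun b hb => by rw [hPeq b hb]
    calc logMass N (fun g => G g ∧ ∀ b ∈ cons a s ha, P b g)
        = logMass N (fun g => (G g ∧ ∀ b ∈ s, P b g) ∧ P a g) := by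
          simp only [forall_mem_cons, and_assoc, and_comm (a := P a _)]
      _ ≤ B * logMass N (fun g => G g ∧ ∀ b ∈ s, P b g) := logMass_and_le hN hind hmass.1
      _ ≤ B * (B ^ #s * logMass N G) :=
        mul_le_mul_of_nonneg_left (ih hG.2 (fun b hb => (hP.2 b hb).2) hmass.2) hB
      _ = B ^ #(cons a s ha) * logMass N G := by rw [card_cons, pow_succ]; ring

lemma logMass_sum (p : (ι ⊕ κ → ℕ) → Prop) [DecidablePred p] :
    logMass N p = ∑ q ∈ tupleBox ι N ×ˢ tupleBox κ N with p (Sum.elim q.1 q.2),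
      logWeight q.1 * logWeight q.2 := by
  refine sum_equiv (Equiv.sumArrowEquivProdArrow ι κ ℕ) (fun g => ?_) fun g _ => ?_
  · have hg : Sum.elim (g ∘ Sum.inl) (g ∘ Sum.inr) = g := Sum.elim_comp_inl_inr g
    simp only [mem_filter, mem_product, mem_tupleBox, Sum.forall]
    exact and_congr_right fun _ => (congrArg p hg.symm).to_iff
  · rw [logWeight, Fintype.prod_sum_type]
    rfl

lemma logMass_comp_inl (p : (ι → ℕ) → Prop) :
    logMass N (fun g : ι ⊕ κ → ℕ => p (g ∘ Sum.inl)) =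
      (harmonic N : ℝ) ^ Fintype.card κ * logMass N p := by
  classical
  rw [logMass_sum, logMass, ← sum_logWeight, mul_comm, sum_mul_sum, ← sum_product',
    ← filter_product_left]
  congr!

lemma logMass_comp_equiv (e : κ ≃ ι) (p : (κ → ℕ) → Prop) :
    logMass N (fun g : ι → ℕ => p (g ∘ e)) = logMass N p := by
  refine sum_equiv (e.arrowCongr (Equiv.refl ℕ)).symm (fun g => ?_) fun g _ => ?_
  · simp only [mem_filter, mem_tupleBox, e.forall_congr_left]
    simp [Equiv.arrowCongr]
  · exact (Fintype.prod_equiv e _ _ fun _ => rfl).symm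

lemma logMass_comp_embedding (e : κ ↪ ι) (p : (κ → ℕ) → Prop) :
    logMass N (fun g : ι → ℕ => p (g ∘ e)) =
      (harmonic N : ℝ) ^ (Fintype.card ι - Fintype.card κ) * logMass N p := by
  classical
  let e' : κ ⊕ ↥(Set.range e)ᶜ ≃ ι :=
    ((e.toEquivRange).sumCongr (Equiv.refl _)).trans (Equiv.Set.sumCompl (Set.range e))
  have hcard : Fintype.card ι - Fintype.card κ = Fintype.card ↥(Set.range e)ᶜ := by
    rw [← Fintype.card_congr e', Fintype.card_sum, Nat.add_sub_cancel_left]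
  rw [hcard, ← logMass_comp_inl, ← logMass_comp_equiv e']
  rfl

end LogMass

section LineCondition

variable {x H : ℕ}

lemma card_mul_le_of_forall_mul_mem_Ioc {T : Finset ℕ} {r : ℕ} (hr : 0 < r)
    (hT : ∀ t ∈ T, t * r ∈ Ioc x (x + H)) : #T * r ≤ H + r := by
  have hsub : T ⊆ Ioc (x / r) ((x + H) / r) := fun t ht => by
    rw [mem_Ioc, Nat.div_lt_iff_lt_mul hr, Nat.le_div_iff_mul_le hr]
    exact mem_Ioc.mp (hT t ht)
  have hcard : #T * r ≤ (x + H) / r * r - x / r * r := by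
    rw [← Nat.sub_mul, ← Nat.card_Ioc]
    exact Nat.mul_le_mul_right _ (card_le_card hsub)
  have hupper := Nat.div_mul_le_self (x + H) r
  have hlower := Nat.lt_div_mul_add (a := x) hr
  lia

lemma sum_inv_le_of_forall_mul_mem_Ioc {T : Finset ℕ} {r : ℕ} (hx : 0 < x) (hr : 0 < r)
    (hT : ∀ t ∈ T, t * r ∈ Ioc x (x + H)) : ∑ t ∈ T, (t : ℝ)⁻¹ ≤ (H + r) / x := by
  have hx' : (0 : ℝ) < x := by exact_mod_cast hx
  have hterm (t : ℕ) (ht : t ∈ T) : (t : ℝ)⁻¹ ≤ r / x := by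
    have htr := (mem_Ioc.mp (hT t ht)).1
    have ht0 : (0 : ℝ) < t := by exact_mod_cast Nat.pos_of_mul_pos_right (hx.trans htr)
    rw [inv_eq_one_div, div_le_div_iff₀ ht0 hx', one_mul, mul_comm]
    exact_mod_cast htr.le
  calc ∑ t ∈ T, (t : ℝ)⁻¹ ≤ #T • ((r : ℝ) / x) := sum_le_card_nsmul _ _ _ hterm
    _ = ((#T * r : ℕ) : ℝ) / x := by rw [nsmul_eq_mul]; push_cast; ring
    _ ≤ (H + r) / x := by
      gcongr
      exact_mod_cast card_mul_le_of_forall_mul_mem_Ioc hr hT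

variable {ι : Type*}

/-- The product of `g` along the line `l` lies in `(x, x + H]`, and the entry of `g` at the pivot
`v` is at least `x / H`. In the matrix of a common refinement the lines are the rows and columns;
a large pivot makes the condition save a factor `H / x` in logarithmic mass. -/
def LineCond (x H : ℕ) (l : Finset ι) (v : ι) (g : ι → ℕ) : Prop :=
  ∏ u ∈ l, g u ∈ Ioc x (x + H) ∧ x ≤ H * g v

instance (l : Finset ι) (v : ι) : DecidablePred (LineCond x H l v) :=
  fun _ => inferInstanceAs (Decidable (_ ∧ _))

lemma dependsOn_lineCond {l : Finset ι} {v w : ι} (hv : v ∈ l) (hw : w ∉ l) :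
    DependsOn (LineCond x H l v) {w}ᶜ := fun g g' h => by
  have hl (u : ι) (hu : u ∈ l) : g u = g' u := h u (ne_of_mem_of_not_mem hu hw)
  rw [LineCond, LineCond, hl v hv, prod_congr rfl hl]

lemma sum_lineCond_update_le [Fintype ι] [DecidableEq ι] {N : ℕ} (hx : 0 < x) (hHx : H ≤ x)
    {l : Finset ι} {v : ι} (hv : v ∈ l) {g : ι → ℕ} (hg : g ∈ tupleBox ι N) :
    ∑ t ∈ Icc 1 N with LineCond x H l v (Function.update g v t), (t : ℝ)⁻¹ ≤ 3 * H / x := by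
  set r := ∏ u ∈ l \ {v}, g u with hr
  have hr0 : 0 < r := prod_pos fun u _ => (mem_Icc.mp (mem_tupleBox.mp hg u)).1
  simp only [LineCond, prod_update_of_mem hv, Function.update_self, ← hr]
  set T := {t ∈ Icc 1 N | t * r ∈ Ioc x (x + H) ∧ x ≤ H * t}
  have hT (t : ℕ) (ht : t ∈ T) : t * r ∈ Ioc x (x + H) ∧ x ≤ H * t := (mem_filter.mp ht).2
  rcases T.eq_empty_or_nonempty with hempty | ⟨t, ht⟩
  · rw [hempty, sum_empty]
    positivity
  · have hrH : r ≤ 2 * H := by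
      obtain ⟨htr, hpivot⟩ := hT t ht
      rw [mem_Ioc] at htr
      exact Nat.le_of_mul_le_mul_left (by linarith) (Nat.pos_of_mul_pos_right (hx.trans htr.1))
    refine (sum_inv_le_of_forall_mul_mem_Ioc hx hr0 fun t ht => (hT t ht).1).trans ?_
    gcongr
    exact_mod_cast (by lia : H + r ≤ 3 * H)

end LineCondition

section RelClose

/-- Distinct integers at relative distance at most `δ`. -/
def RelClose (δ : ℝ) (r c : ℕ) : Prop := r ≠ c ∧ |(r : ℝ) - c| ≤ δ * min (r : ℝ) c

lemma symm_relClose (δ : ℝ) : Std.Symm (RelClose δ) :=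
  ⟨fun _ _ h => ⟨h.1.symm, by rw [abs_sub_comm, min_comm]; exact h.2⟩⟩

lemma relClose_of_mul_mem_Ioc {x H v r c : ℕ} (hx : 0 < x) (hrc : r ≠ c)
    (hr : v * r ∈ Ioc x (x + H)) (hc : v * c ∈ Ioc x (x + H)) : RelClose (H / x) r c := by
  refine ⟨hrc, ?_⟩
  rw [mem_Ioc] at hr hc
  have hdist : |((v * r : ℕ) : ℝ) - (v * c : ℕ)| ≤ H := by
    rw [abs_sub_le_iff, sub_le_iff_le_add, sub_le_iff_le_add]
    exact_mod_cast (⟨by lia, by lia⟩ : v * r ≤ H + v * c ∧ v * c ≤ H + v * r)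
  have hmin : (x : ℝ) ≤ v * min (r : ℝ) c := by
    rw [mul_min_of_nonneg _ _ (Nat.cast_nonneg v)]
    exact le_min (by exact_mod_cast hr.1.le) (by exact_mod_cast hc.1.le)
  push_cast at hdist
  rw [← mul_sub, abs_mul, Nat.abs_cast] at hdist
  rw [div_mul_eq_mul_div, le_div_iff₀ (by exact_mod_cast hx)]
  calc |(r : ℝ) - c| * x ≤ |(r : ℝ) - c| * (v * min (r : ℝ) c) := by gcongr
    _ = v * |(r : ℝ) - c| * min (r : ℝ) c := by ring
    _ ≤ H * min (r : ℝ) c := by gcongr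

lemma card_relClose_le {δ : ℝ} (hδ : 0 ≤ δ) (r : ℕ) (R : Finset ℕ) [DecidableRel (RelClose δ)] :
    (#{c ∈ R | RelClose δ r c} : ℝ) ≤ 2 * (δ * r) := by
  have hsub : {c ∈ R | RelClose δ r c} ⊆ (Icc (r - ⌊δ * r⌋₊) (r + ⌊δ * r⌋₊)).erase r := by
    intro c hc
    obtain ⟨-, hne, hle⟩ := mem_filter.mp hc
    have hdist : |(r : ℝ) - c| ≤ δ * r :=
      hle.trans (mul_le_mul_of_nonneg_left (min_le_left _ _) hδ)
    have hnat : ((r : ℤ) - c).natAbs ≤ ⌊δ * r⌋₊ := Nat.le_floor <| by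
      rw [Nat.cast_natAbs]
      exact_mod_cast hdist
    rw [mem_erase, mem_Icc]
    lia
  have hcard : #{c ∈ R | RelClose δ r c} ≤ 2 * ⌊δ * r⌋₊ := by
    have h := card_le_card hsub
    rw [card_erase_of_mem (by simp), Nat.card_Icc] at h
    lia
  calc (#{c ∈ R | RelClose δ r c} : ℝ) ≤ 2 * (⌊δ * r⌋₊ : ℝ) := by exact_mod_cast hcard
    _ ≤ 2 * (δ * r) := by
      gcongr
      exact Nat.floor_le (by positivity)

/-- Schur's test for a symmetric relation. -/
lemma sum_sum_mul_le_of_symmetric {α : Type*} (R : Finset α) {P : α → α → Prop} [DecidableRel P]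
    (hP : Std.Symm P) (u : α → ℝ) :
    ∑ r ∈ R, ∑ c ∈ R with P r c, u r * u c ≤ ∑ r ∈ R, #{c ∈ R | P r c} * u r ^ 2 := by
  have hswap : ∑ r ∈ R, ∑ c ∈ R with P r c, u c ^ 2 = ∑ r ∈ R, ∑ c ∈ R with P r c, u r ^ 2 := by
    simp_rw [sum_filter]
    rw [sum_comm]
    simp_rw [comm_of P]
  calc ∑ r ∈ R, ∑ c ∈ R with P r c, u r * u c
      ≤ ∑ r ∈ R, ∑ c ∈ R with P r c, (u r ^ 2 / 2 + u c ^ 2 / 2) :=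
        sum_le_sum fun r _ => sum_le_sum fun c _ => by linarith [two_mul_le_add_sq (u r) (u c)]
    _ = ∑ r ∈ R, ∑ c ∈ R with P r c, u r ^ 2 := by
        simp_rw [sum_add_distrib, ← sum_div, hswap]
        ring
    _ = ∑ r ∈ R, #{c ∈ R | P r c} * u r ^ 2 := by simp_rw [sum_const, nsmul_eq_mul]

open scoped Classical in
/-- Grouping by the values of `φ` turns the left side into a quadratic form in the fibre sizes. -/
lemma sum_relClose_inv_mul_inv_le {α : Type*} {δ : ℝ} (hδ : 0 ≤ δ) (S : Finset α) (φ : α → ℕ) :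
    ∑ q ∈ S ×ˢ S with RelClose δ (φ q.1) (φ q.2), (φ q.1 : ℝ)⁻¹ * (φ q.2 : ℝ)⁻¹ ≤
      2 * δ * ∑ q ∈ S ×ˢ S with φ q.1 = φ q.2, (φ q.1 : ℝ)⁻¹ := by
  set u : ℕ → ℝ := fun r => #{a ∈ S | φ a = r} * (r : ℝ)⁻¹ with hu
  set R := S.image φ
  have sum_comp_eq (F : ℕ → ℝ) : ∑ a ∈ S, F (φ a) = ∑ r ∈ R, #{a ∈ S | φ a = r} * F r := by
    simp_rw [sum_comp F φ, nsmul_eq_mul]; rfl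
  calc ∑ q ∈ S ×ˢ S with RelClose δ (φ q.1) (φ q.2), (φ q.1 : ℝ)⁻¹ * (φ q.2 : ℝ)⁻¹
      = ∑ r ∈ R, ∑ c ∈ R with RelClose δ r c, u r * u c := by
        simp_rw [sum_filter, sum_product]
        rw [sum_comp_eq fun r => ∑ b ∈ S, if RelClose δ r (φ b) then
          (r : ℝ)⁻¹ * (φ b : ℝ)⁻¹ else 0]
        refine sum_congr rfl fun r _ => ?_
        rw [sum_comp_eq fun c => if RelClose δ r c then (r : ℝ)⁻¹ * (c : ℝ)⁻¹ else 0, mul_sum]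
        refine sum_congr rfl fun c _ => ?_
        simp only [hu, mul_ite, mul_zero]
        congr 1
        ring
    _ ≤ ∑ r ∈ R, #{c ∈ R | RelClose δ r c} * u r ^ 2 :=
        sum_sum_mul_le_of_symmetric R (symm_relClose δ) u
    _ ≤ ∑ r ∈ R, 2 * (δ * r) * u r ^ 2 := by
        gcongr with r
        exact card_relClose_le hδ r R
    _ = 2 * δ * ∑ r ∈ R, #{a ∈ S | φ a = r} * (#{a ∈ S | φ a = r} * (r : ℝ)⁻¹) := by
        rw [mul_sum]
        refine sum_congr rfl fun r _ => ?_
        rcases eq_or_ne (r : ℝ) 0 with h | h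
        · simp [h]
        · simp only [hu]
          field_simp
    _ = 2 * δ * ∑ q ∈ S ×ˢ S with φ q.1 = φ q.2, (φ q.1 : ℝ)⁻¹ := by
        rw [← sum_comp_eq fun r => #{a ∈ S | φ a = r} * (r : ℝ)⁻¹, sum_filter, sum_product]
        congr 1
        refine sum_congr rfl fun a _ => ?_
        simp only [← sum_filter, sum_const, nsmul_eq_mul, eq_comm (a := φ a)]

end RelClose

section CommonRefinement

variable {k N : ℕ}

/-- The matrix `g` is a common refinement of the factorizations `∏ q.1 i = ∏ q.2 j`: its row
products are the `q.1 i` and its column products the `q.2 j`. -/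
def IsCommonRefinement (g : Fin k × Fin k → ℕ) (q : (Fin k → ℕ) × (Fin k → ℕ)) : Prop :=
  (∀ i, ∏ j, g (i, j) = q.1 i) ∧ ∀ j, ∏ i, g (i, j) = q.2 j

lemma IsCommonRefinement.logWeight_eq {g : Fin k × Fin k → ℕ} {q : (Fin k → ℕ) × (Fin k → ℕ)}
    (h : IsCommonRefinement g q) : logWeight g = logWeight q.1 := by
  simp only [logWeight_eq_inv, Fintype.prod_prod_type, h.1]

lemma exists_isCommonRefinement {q : (Fin k → ℕ) × (Fin k → ℕ)}
    (hq : q ∈ equalProductPairs k (Icc 1 N)) :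
    ∃ g ∈ tupleBox (Fin k × Fin k) N, IsCommonRefinement g q := by
  obtain ⟨⟨hrow, -⟩, hprod⟩ := mem_equalProductPairs.mp hq
  obtain ⟨g, hg, hg'⟩ := exists_common_refinement_of_prod_eq univ
    (fun i _ => Nat.one_le_iff_ne_zero.mp (mem_Icc.mp (hrow i)).1) hprod
  refine ⟨fun u => g u.1 u.2, mem_tupleBox.mpr fun u => ?_, fun i => hg i (mem_univ i), hg'⟩
  have hdvd : g u.1 u.2 ∣ q.1 u.1 := hg u.1 (mem_univ _) ▸ dvd_prod_of_mem _ (mem_univ u.2)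
  have hq1 := mem_Icc.mp (hrow u.1)
  exact mem_Icc.mpr ⟨Nat.pos_of_dvd_of_pos hdvd hq1.1, (Nat.le_of_dvd hq1.1 hdvd).trans hq1.2⟩

lemma sum_logWeight_le_logMass {S : Finset ((Fin k → ℕ) × (Fin k → ℕ))}
    (hS : S ⊆ equalProductPairs k (Icc 1 N)) {p : (Fin k × Fin k → ℕ) → Prop}
    (hp : ∀ q ∈ S, ∀ g, IsCommonRefinement g q → p g) :
    ∑ q ∈ S, logWeight q.1 ≤ logMass N p := by
  classical
  choose! φ hφ hφ' using fun q (hq : q ∈ S) => exists_isCommonRefinement (hS hq)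
  have hinj : Set.InjOn φ S := fun q hq q' hq' h => by
    refine Prod.ext (funext fun i => ?_) (funext fun j => ?_)
    · rw [← (hφ' q hq).1, h, (hφ' q' hq').1]
    · rw [← (hφ' q hq).2, h, (hφ' q' hq').2]
  rw [← sum_congr rfl fun q hq => (hφ' q hq).logWeight_eq, ← sum_image hinj]
  refine sum_le_sum_of_subset_of_nonneg (fun g hg => ?_) fun _ _ _ => logWeight_nonneg _
  obtain ⟨q, hq, rfl⟩ := mem_image.mp hg
  exact mem_filter.mpr ⟨hφ q hq, hp q hq _ (hφ' q hq)⟩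

lemma card_le_pow_mul_logMass {S : Finset ((Fin k → ℕ) × (Fin k → ℕ))}
    (hS : S ⊆ equalProductPairs k (Icc 1 N)) {p : (Fin k × Fin k → ℕ) → Prop}
    (hp : ∀ q ∈ S, ∀ g, IsCommonRefinement g q → p g) :
    (#S : ℝ) ≤ (N : ℝ) ^ k * logMass N p := by
  refine le_trans ?_ (mul_le_mul_of_nonneg_left (sum_logWeight_le_logMass hS hp) (by positivity))
  rw [mul_sum, card_eq_sum_ones, Nat.cast_sum]
  refine sum_le_sum fun q hq => ?_
  have hq1 (i : Fin k) := mem_Icc.mp ((mem_equalProductPairs.mp (hS hq)).1.1 i)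
  have hpos : 0 < ∏ i, q.1 i := prod_pos fun i _ => (hq1 i).1
  rw [logWeight_eq_inv, ← div_eq_mul_inv, Nat.cast_one, one_le_div (by exact_mod_cast hpos)]
  exact_mod_cast (prod_le_prod' fun i _ => (hq1 i).2).trans_eq (by simp)

lemma card_equalProductPairs_Icc_le (k N : ℕ) :
    (#(equalProductPairs k (Icc 1 N)) : ℝ) ≤ (N : ℝ) ^ k * (harmonic N : ℝ) ^ k ^ 2 := by
  refine (card_le_pow_mul_logMass subset_rfl (p := fun _ => True) fun _ _ _ _ => trivial).trans ?_
  rw [logMass_true, Fintype.card_prod, Fintype.card_fin, sq]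

lemma logMass_relClose_prod_le {δ : ℝ} (hδ : 0 ≤ δ) (k N : ℕ) :
    logMass N (fun g : Fin k ⊕ Fin k → ℕ =>
      RelClose δ (∏ i, g (Sum.inl i)) (∏ i, g (Sum.inr i))) ≤
      2 * δ * (harmonic N : ℝ) ^ k ^ 2 := by
  classical
  have hpairs : ∑ q ∈ tupleBox (Fin k) N ×ˢ tupleBox (Fin k) N with ∏ i, q.1 i = ∏ i, q.2 i,
      logWeight q.1 ≤ (harmonic N : ℝ) ^ k ^ 2 := by
    refine (sum_logWeight_le_logMass (p := fun _ => True) subset_rfl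
      fun _ _ _ _ => trivial).trans_eq ?_
    rw [logMass_true, Fintype.card_prod, Fintype.card_fin, sq]
  rw [logMass_sum]
  simp only [Sum.elim_inl, Sum.elim_inr, logWeight_eq_inv] at hpairs ⊢
  exact (sum_relClose_inv_mul_inv_le hδ (tupleBox (Fin k) N) fun g => ∏ i, g i).trans
    (mul_le_mul_of_nonneg_left hpairs (by positivity))

end CommonRefinement

section MatrixCount

variable {k n N x H : ℕ}

/-- The positions in row `i` of a `k × k` matrix. -/
def matrixRow (i : Fin k) : Finset (Fin k × Fin k) := {i} ×ˢ univ

/-- The positions in column `j` of a `k × k` matrix. -/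
def matrixCol (j : Fin k) : Finset (Fin k × Fin k) := univ ×ˢ {j}

lemma mem_matrixRow {i : Fin k} {u : Fin k × Fin k} : u ∈ matrixRow i ↔ u.1 = i := by
  rw [matrixRow, mem_product, mem_singleton, and_iff_left (mem_univ _)]

lemma mem_matrixCol {j : Fin k} {u : Fin k × Fin k} : u ∈ matrixCol j ↔ u.2 = j := by
  rw [matrixCol, mem_product, mem_singleton, and_iff_right (mem_univ _)]

lemma prod_matrixRow (i : Fin k) (g : Fin k × Fin k → ℕ) :
    ∏ u ∈ matrixRow i, g u = ∏ j, g (i, j) := by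
  rw [matrixRow, prod_product, prod_singleton]

lemma prod_matrixCol (j : Fin k) (g : Fin k × Fin k → ℕ) :
    ∏ u ∈ matrixCol j, g u = ∏ i, g (i, j) := by
  simp_rw [matrixCol, prod_product, prod_singleton]

lemma dependsOn_lineCond_matrixRow {i j : Fin k} {v : Fin k × Fin k} (hi : v.1 ≠ i) :
    DependsOn (LineCond x H (matrixRow i) (i, j)) {v}ᶜ :=
  dependsOn_lineCond (mem_matrixRow.mpr rfl) (mt mem_matrixRow.mp hi)

lemma logMass_and_rows_le (hN : 1 ≤ N) (hx : 0 < x) (hHx : H ≤ x) {σ : Fin k → Fin k}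
    {s : Finset (Fin k)} {G : (Fin k × Fin k → ℕ) → Prop}
    (hG : ∀ i ∈ s, DependsOn G {(i, σ i)}ᶜ) :
    logMass N (fun g => G g ∧ ∀ i ∈ s, LineCond x H (matrixRow i) (i, σ i) g) ≤
      (3 * H / x : ℝ) ^ #s * logMass N G :=
  logMass_and_forall_le hN s (by positivity) hG
    (fun _ _ _ _ hij => dependsOn_lineCond_matrixRow hij.symm)
    fun _ _ _ hg => sum_lineCond_update_le hx hHx (mem_matrixRow.mpr rfl) hg

lemma logMass_rows_le (hN : 1 ≤ N) (hx : 0 < x) (hHx : H ≤ x) (σ : Fin k → Fin k)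
    (s : Finset (Fin k)) :
    logMass N (fun g => ∀ i ∈ s, LineCond x H (matrixRow i) (i, σ i) g) ≤
      (3 * H / x : ℝ) ^ #s * (harmonic N : ℝ) ^ k ^ 2 := by
  have h := logMass_and_rows_le hN hx hHx (σ := σ) (s := s) (G := fun _ => True)
    fun _ _ => (dependsOn_const True).mono (Set.empty_subset _)
  simpa only [true_and, logMass_true, Fintype.card_prod, Fintype.card_fin, ← sq] using h

lemma logMass_rows_and_col_le (hN : 1 ≤ N) (hx : 0 < x) (hHx : H ≤ x) (σ : Fin k → Fin k)
    {a b : Fin k} (hb : b ≠ σ a) :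
    logMass N (fun g => (∀ i, LineCond x H (matrixRow i) (i, σ i) g) ∧
      LineCond x H (matrixCol b) (a, b) g) ≤
      (3 * H / x : ℝ) ^ (k + 1) * (harmonic N : ℝ) ^ k ^ 2 := by
  set B : ℝ := 3 * H / x
  set Rows : (Fin k × Fin k → ℕ) → Prop := fun g =>
    ∀ i ∈ univ.erase a, LineCond x H (matrixRow i) (i, σ i) g
  have hRows_dep (c : Fin k) : DependsOn Rows {(a, c)}ᶜ := fun g g' h =>
    propext <| forall₂_congr fun i hi => Eq.to_iff <|
      dependsOn_lineCond_matrixRow (v := (a, c)) (ne_of_mem_erase hi).symm h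
  have hcol_dep : DependsOn (LineCond x H (matrixCol b) (a, b)) {(a, σ a)}ᶜ :=
    dependsOn_lineCond (mem_matrixCol.mpr rfl) fun h => hb (mem_matrixCol.mp h).symm
  have hcard : #(univ.erase a) + 1 = k := by
    rw [card_erase_add_one (mem_univ a), card_univ, Fintype.card_fin]
  calc _ ≤ logMass N (fun g => (Rows g ∧ LineCond x H (matrixCol b) (a, b) g) ∧
          LineCond x H (matrixRow a) (a, σ a) g) :=
        logMass_mono fun g _ h => ⟨⟨fun i _ => h.1 i, h.2⟩, h.1 a⟩
    _ ≤ B * logMass N (fun g => Rows g ∧ LineCond x H (matrixCol b) (a, b) g) :=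
        logMass_and_le hN (fun g g' h => congrArg₂ And (hRows_dep _ h) (hcol_dep h))
          fun g hg => sum_lineCond_update_le hx hHx (mem_matrixRow.mpr rfl) hg
    _ ≤ B * (B * logMass N Rows) := by
        gcongr
        exact logMass_and_le hN (hRows_dep b)
          fun g hg => sum_lineCond_update_le hx hHx (mem_matrixCol.mpr rfl) hg
    _ ≤ B * (B * (B ^ #(univ.erase a) * (harmonic N : ℝ) ^ k ^ 2)) := by
        gcongr
        exact logMass_rows_le hN hx hHx σ (univ.erase a)
    _ = B ^ (k + 1) * (harmonic N : ℝ) ^ k ^ 2 := by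
        rw [show k + 1 = #(univ.erase a) + 2 by lia]
        ring

/-- The positions of the cross centred at `(a, b)`, without the centre: first the horizontal arm,
then the vertical one. -/
def crossArms (a b : Fin (n + 1)) : Fin n ⊕ Fin n ↪ Fin (n + 1) × Fin (n + 1) where
  toFun := Sum.elim (fun j => (a, b.succAbove j)) fun i => (a.succAbove i, b)
  inj' := Function.Injective.sumElim
    (fun _ _ h => Fin.succAbove_right_injective (congrArg Prod.snd h))
    (fun _ _ h => Fin.succAbove_right_injective (congrArg Prod.fst h))
    fun _ _ h => Fin.succAbove_ne b _ (congrArg Prod.snd h)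

/-- The products of `g` along the two arms of the cross centred at `(a, b)` are distinct and
relatively close. -/
def CrossClose (δ : ℝ) (a b : Fin (n + 1)) (g : Fin (n + 1) × Fin (n + 1) → ℕ) : Prop :=
  RelClose δ (∏ j, g (a, b.succAbove j)) (∏ i, g (a.succAbove i, b))

lemma dependsOn_crossClose (δ : ℝ) (a b : Fin (n + 1)) {v : Fin (n + 1) × Fin (n + 1)}
    (hv : v.1 = a ↔ v.2 = b) : DependsOn (CrossClose δ a b) {v}ᶜ := fun g g' h => by
  have hrow (j : Fin n) : g (a, b.succAbove j) = g' (a, b.succAbove j) :=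
    h _ <| by
      rintro rfl
      exact Fin.succAbove_ne b j (hv.mp rfl)
  have hcol (i : Fin n) : g (a.succAbove i, b) = g' (a.succAbove i, b) :=
    h _ <| by
      rintro rfl
      exact Fin.succAbove_ne a i (hv.mpr rfl)
  simp only [CrossClose, hrow, hcol]

lemma logMass_crossClose_le (hN : 1 ≤ N) {δ : ℝ} (hδ : 0 ≤ δ) (a b : Fin (n + 1)) :
    logMass N (CrossClose δ a b) ≤ 2 * δ * (harmonic N : ℝ) ^ (2 * (n + 1) ^ 2) := by
  have hL := one_le_harmonic hN
  calc logMass N (CrossClose δ a b)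
      = (harmonic N : ℝ) ^ ((n + 1) * (n + 1) - (n + n)) * logMass N (fun g : Fin n ⊕ Fin n → ℕ =>
          RelClose δ (∏ i, g (Sum.inl i)) (∏ i, g (Sum.inr i))) := by
        refine (logMass_comp_embedding (crossArms a b)
          fun g => RelClose δ (∏ i, g (Sum.inl i)) (∏ i, g (Sum.inr i))).trans ?_
        simp only [Fintype.card_prod, Fintype.card_sum, Fintype.card_fin]
    _ ≤ (harmonic N : ℝ) ^ (n + 1) ^ 2 * (2 * δ * (harmonic N : ℝ) ^ (n + 1) ^ 2) := by
        have hexp : (n + 1) * (n + 1) - (n + n) ≤ (n + 1) ^ 2 :=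
          (Nat.sub_le _ _).trans_eq (sq _).symm
        refine mul_le_mul (pow_le_pow_right₀ hL hexp) ?_ (logMass_nonneg _) (by positivity)
        exact (logMass_relClose_prod_le hδ n N).trans (by gcongr; lia)
    _ = 2 * δ * (harmonic N : ℝ) ^ (2 * (n + 1) ^ 2) := by
        rw [two_mul ((n + 1) ^ 2), pow_add]
        ring

lemma logMass_rows_and_cross_le (hN : 1 ≤ N) (hx : 0 < x) (hHx : H ≤ x)
    {σ : Fin (n + 1) → Fin (n + 1)} (hσ : Function.Injective σ) (a : Fin (n + 1)) :
    logMass N (fun g => (∀ i, LineCond x H (matrixRow i) (i, σ i) g) ∧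
      CrossClose (H / x) a (σ a) g) ≤
      (3 * H / x : ℝ) ^ (n + 1 + 1) * (harmonic N : ℝ) ^ (2 * (n + 1) ^ 2) := by
  have hL := one_le_harmonic hN
  calc _ ≤ logMass N (fun g => CrossClose (H / x) a (σ a) g ∧
          ∀ i ∈ univ, LineCond x H (matrixRow i) (i, σ i) g) :=
        logMass_mono fun g _ h => ⟨h.2, fun i _ => h.1 i⟩
    _ ≤ (3 * H / x : ℝ) ^ #(univ : Finset (Fin (n + 1))) *
          logMass N (CrossClose (H / x) a (σ a)) :=
        logMass_and_rows_le hN hx hHx fun i _ => dependsOn_crossClose _ _ _ hσ.eq_iff.symm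
    _ ≤ (3 * H / x : ℝ) ^ (n + 1) *
          (3 * H / x * (harmonic N : ℝ) ^ (2 * (n + 1) ^ 2)) := by
        rw [card_univ, Fintype.card_fin]
        gcongr
        refine (logMass_crossClose_le hN (by positivity) a (σ a)).trans ?_
        rw [← mul_div_assoc]
        gcongr
        norm_num
    _ = _ := by rw [← mul_assoc, ← pow_succ]

end MatrixCount

section LongRegime

variable {k n N x H : ℕ}

lemma exists_le_mul_of_lt_prod (hH : 0 < H) (hxH : x ^ k ≤ x * H ^ k) {f : Fin k → ℕ}
    (hf : x < ∏ j, f j) : ∃ j, x ≤ H * f j := by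
  by_contra! hsmall
  have hle : H ^ k * ∏ j, f j ≤ x ^ k := by
    simpa [prod_mul_distrib] using prod_le_prod' fun j (_ : j ∈ univ) => (hsmall j).le
  have hlt : H ^ k * x < H ^ k * ∏ j, f j := Nat.mul_lt_mul_of_pos_left hf (by positivity)
  lia

/-- Every row of the matrix `g` has a large entry, in the column given by `σ`. In addition either
column `b` has a large entry `(a, b)` which is not among these, or `σ` is injective and the cross
centred at `(a, b)`, with `b = σ a`, has close arms. -/
def RefinementEvent (x H : ℕ) (σ : Fin (n + 1) → Fin (n + 1)) (a b : Fin (n + 1))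
    (g : Fin (n + 1) × Fin (n + 1) → ℕ) : Prop :=
  (∀ i, LineCond x H (matrixRow i) (i, σ i) g) ∧
    (b ≠ σ a ∧ LineCond x H (matrixCol b) (a, b) g ∨
      b = σ a ∧ Function.Injective σ ∧ CrossClose (H / x) a b g)

lemma logMass_refinementEvent_le (hN : 1 ≤ N) (hx : 0 < x) (hHx : H ≤ x)
    (σ : Fin (n + 1) → Fin (n + 1)) (a b : Fin (n + 1)) :
    logMass N (RefinementEvent x H σ a b) ≤
      (3 * H / x : ℝ) ^ (n + 2) * (harmonic N : ℝ) ^ (2 * (n + 1) ^ 2) := by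
  have hL := one_le_harmonic hN
  by_cases hb : b = σ a
  · subst hb
    refine (logMass_mono fun g _ h => ?_).trans (logMass_const_and_le (by positivity)
      fun hσ : Function.Injective σ => logMass_rows_and_cross_le hN hx hHx hσ a)
    obtain ⟨hrows, ⟨hne, -⟩ | ⟨-, hσ, hcross⟩⟩ := h
    · exact absurd rfl hne
    · exact ⟨hσ, hrows, hcross⟩
  · refine ((logMass_mono fun g _ h => ?_).trans (logMass_rows_and_col_le hN hx hHx σ hb)).trans ?_
    · exact ⟨h.1, (h.2.resolve_right fun h' => hb h'.1).2⟩
    · gcongr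
      lia

/-- A line whose product exceeds `x` contains an entry that is at least `x / H`. If the columns do
not provide an entry other than those chosen in the rows, the chosen ones form a permutation
matrix; cancelling a common large entry from its row and its column leaves close integers. -/
lemma exists_refinementEvent (hx : 0 < x) (hH : 0 < H) (hxH : x ^ (n + 1) ≤ x * H ^ (n + 1))
    {q : (Fin (n + 1) → ℕ) × (Fin (n + 1) → ℕ)} (hq : q ∈ disjointPairs (n + 1) (Ioc x (x + H)))
    {g : Fin (n + 1) × Fin (n + 1) → ℕ} (hg : IsCommonRefinement g q) :
    ∃ s : (Fin (n + 1) → Fin (n + 1)) × Fin (n + 1) × Fin (n + 1),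
      RefinementEvent x H s.1 s.2.1 s.2.2 g := by
  obtain ⟨hq, hne⟩ := mem_filter.mp hq
  obtain ⟨⟨hrow, hcol⟩, -⟩ := mem_equalProductPairs.mp hq
  simp only [← hg.1, ← hg.2] at hrow hcol hne
  have exists_large {f : Fin (n + 1) → ℕ} (hf : ∏ j, f j ∈ Ioc x (x + H)) : ∃ j, x ≤ H * f j :=
    exists_le_mul_of_lt_prod hH hxH (mem_Ioc.mp hf).1
  choose σ hσ using fun i => exists_large (hrow i)
  have hrows (i) : LineCond x H (matrixRow i) (i, σ i) g := ⟨prod_matrixRow i g ▸ hrow i, hσ i⟩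
  by_cases hextra : ∃ a b, b ≠ σ a ∧ x ≤ H * g (a, b)
  · obtain ⟨a, b, hb, hab⟩ := hextra
    exact ⟨(σ, a, b), hrows, .inl ⟨hb, prod_matrixCol b g ▸ hcol b, hab⟩⟩
  · push Not at hextra
    have hsurj : Function.Surjective σ := fun b => by
      obtain ⟨a, ha⟩ := exists_large (hcol b)
      exact ⟨a, by_contra fun hab => (hextra a b (Ne.symm hab)).not_ge ha⟩
    refine ⟨(σ, 0, σ 0), hrows, .inr ⟨rfl, Finite.injective_iff_surjective.mpr hsurj, ?_⟩⟩
    have hrow0 := Fin.prod_univ_succAbove (fun j => g (0, j)) (σ 0)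
    have hcol0 := Fin.prod_univ_succAbove (fun i => g (i, σ 0)) 0
    refine relClose_of_mul_mem_Ioc (v := g (0, σ 0)) hx (fun h => hne 0 (σ 0) ?_) ?_ ?_
    · rw [hrow0, hcol0, h]
    · exact hrow0 ▸ hrow 0
    · exact hcol0 ▸ hcol (σ 0)

lemma Ioc_add_subset_Icc_one (x H : ℕ) : Ioc x (x + H) ⊆ Icc 1 (x + H) := fun t ht => by
  rw [mem_Ioc] at ht
  exact mem_Icc.mpr ⟨by lia, ht.2⟩

lemma card_disjointPairs_le_of_long (n : ℕ) (hx : 0 < x) (hH : 0 < H) (hHx : H ≤ x)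
    (hxH : x ^ (n + 1) ≤ x * H ^ (n + 1)) :
    (#(disjointPairs (n + 1) (Ioc x (x + H))) : ℝ) ≤
      6 ^ (n + 2) * (n + 1) ^ (n + 3) * H ^ (n + 1) *
        (H / x * (harmonic (x + H) : ℝ) ^ (2 * (n + 1) ^ 2)) := by
  set L : ℝ := (harmonic (x + H) : ℝ) ^ (2 * (n + 1) ^ 2)
  set events := fun s : (Fin (n + 1) → Fin (n + 1)) × Fin (n + 1) × Fin (n + 1) =>
    RefinementEvent x H s.1 s.2.1 s.2.2
  have hN : 1 ≤ x + H := by lia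
  have hL : 0 ≤ L := pow_nonneg (zero_le_one.trans (one_le_harmonic hN)) _
  have : (0 : ℝ) < x := by exact_mod_cast hx
  have hchoices : Fintype.card ((Fin (n + 1) → Fin (n + 1)) × Fin (n + 1) × Fin (n + 1)) =
      (n + 1) ^ (n + 3) := by
    simp only [Fintype.card_prod, Fintype.card_fun, Fintype.card_fin]
    ring
  calc (#(disjointPairs (n + 1) (Ioc x (x + H))) : ℝ)
      ≤ ((x + H : ℕ) : ℝ) ^ (n + 1) * logMass (x + H) fun g => ∃ s, events s g :=
        card_le_pow_mul_logMass
          ((filter_subset _ _).trans (equalProductPairs_mono _ (Ioc_add_subset_Icc_one x H)))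
          fun q hq g hg => exists_refinementEvent hx hH hxH hq hg
    _ ≤ (2 * x) ^ (n + 1) * ∑ s, logMass (x + H) (events s) := by
        gcongr
        · exact logMass_nonneg _
        · exact_mod_cast (by lia : x + H ≤ 2 * x)
        · exact logMass_exists_le events
    _ ≤ (2 * x) ^ (n + 1) * ((n + 1) ^ (n + 3) * ((3 * H / x) ^ (n + 2) * L)) := by
        gcongr
        refine (sum_le_card_nsmul _ _ _ fun s _ =>
          logMass_refinementEvent_le hN hx hHx s.1 s.2.1 s.2.2).trans_eq ?_
        rw [card_univ, hchoices, nsmul_eq_mul]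
        push_cast
        rfl
    _ = 2 ^ (n + 1) * 3 ^ (n + 2) * (n + 1) ^ (n + 3) * H ^ (n + 1) * (H / x * L) := by
        rw [div_pow]
        field_simp
        ring
    _ ≤ 2 ^ (n + 2) * 3 ^ (n + 2) * (n + 1) ^ (n + 3) * H ^ (n + 1) * (H / x * L) := by
        gcongr
        · exact one_le_two
        · lia
    _ = 6 ^ (n + 2) * (n + 1) ^ (n + 3) * H ^ (n + 1) * (H / x * L) := by
        rw [← mul_pow]
        norm_num

end LongRegime

section DivisorBound

lemma exists_succ_pow_le_mul_two_pow (j : ℕ) : ∃ c > 0, ∀ v : ℕ, (v + 1) ^ j ≤ c * 2 ^ v := by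
  refine ⟨(j + 1) ^ j, by positivity, fun v => ?_⟩
  have hv : v + 1 ≤ (j + 1) * 2 ^ (v / (j + 1)) :=
    (Nat.lt_mul_div_succ v j.succ_pos).trans_le (Nat.mul_le_mul_left _ Nat.lt_two_pow_self)
  have hexp : v / (j + 1) * j ≤ v :=
    (Nat.mul_le_mul_left _ j.le_succ).trans (Nat.div_mul_le_self v (j + 1))
  calc (v + 1) ^ j ≤ ((j + 1) * 2 ^ (v / (j + 1))) ^ j := by gcongr
    _ = (j + 1) ^ j * 2 ^ (v / (j + 1) * j) := by rw [mul_pow, ← pow_mul]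
    _ ≤ (j + 1) ^ j * 2 ^ v := by gcongr; exact one_le_two

/-- Only the primes below `2 ^ j` can contribute a factor larger than `p ^ v` to `τ(n) ^ j`. -/
lemma exists_card_divisors_pow_le (j : ℕ) :
    ∃ C > 0, ∀ n : ℕ, n ≠ 0 → #n.divisors ^ j ≤ C * n := by
  obtain ⟨c, hc0, hc⟩ := exists_succ_pow_le_mul_two_pow j
  refine ⟨c ^ 2 ^ j, by positivity, fun n hn => ?_⟩
  have hlocal (p : ℕ) (hp : p ∈ n.primeFactors) : (n.factorization p + 1) ^ j ≤
      (if p < 2 ^ j then c else 1) * p ^ n.factorization p := by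
    split_ifs with h
    · refine (hc _).trans (Nat.mul_le_mul_left _ (Nat.pow_le_pow_left ?_ _))
      exact (Nat.prime_of_mem_primeFactors hp).two_le
    · rw [one_mul]
      calc (n.factorization p + 1) ^ j ≤ (2 ^ n.factorization p) ^ j :=
            Nat.pow_le_pow_left Nat.lt_two_pow_self _
        _ = (2 ^ j) ^ n.factorization p := pow_right_comm _ _ _
        _ ≤ p ^ n.factorization p := Nat.pow_le_pow_left (not_lt.mp h) _
  have hconst : ∏ p ∈ n.primeFactors, (if p < 2 ^ j then c else 1) ≤ c ^ 2 ^ j := by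
    rw [← prod_filter, prod_const]
    refine Nat.pow_le_pow_right hc0 ?_
    simpa only [card_range] using card_le_card (t := range (2 ^ j))
      fun p hp => mem_range.mpr (mem_filter.mp hp).2
  calc #n.divisors ^ j = ∏ p ∈ n.primeFactors, (n.factorization p + 1) ^ j := by
        rw [Nat.card_divisors hn, prod_pow]
    _ ≤ ∏ p ∈ n.primeFactors, (if p < 2 ^ j then c else 1) * p ^ n.factorization p :=
        prod_le_prod' hlocal
    _ = (∏ p ∈ n.primeFactors, if p < 2 ^ j then c else 1) * n := by
        rw [prod_mul_distrib, ← Nat.prod_factorization_eq_prod_primeFactors,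
          Nat.prod_factorization_pow_eq_self hn]
    _ ≤ c ^ 2 ^ j * n := Nat.mul_le_mul_right n hconst

lemma card_le_card_divisors_pow {ι : Type*} [Fintype ι] {n : ℕ} (hn : n ≠ 0)
    {S : Finset (ι → ℕ)} (hS : ∀ d ∈ S, ∏ i, d i = n) : #S ≤ #n.divisors ^ Fintype.card ι := by
  classical
  have hsub : S ⊆ Fintype.piFinset fun _ => n.divisors := fun d hd =>
    Fintype.mem_piFinset.mpr fun i => Nat.mem_divisors.mpr
      ⟨hS d hd ▸ dvd_prod_of_mem d (mem_univ i), hn⟩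
  exact (card_le_card hsub).trans_eq (by rw [Fintype.card_piFinset, prod_const, card_univ])

lemma card_le_pow_mul_card_of_forall_prod_mem {ι : Type*} [Fintype ι] {I : Finset ℕ} {D : ℕ}
    (hI : 0 ∉ I) (hD : ∀ n ∈ I, #n.divisors ≤ D) {E : Finset (ι → ℕ)}
    (hE : ∀ d ∈ E, ∏ i, d i ∈ I) : #E ≤ D ^ Fintype.card ι * #I := by
  refine card_le_mul_card_image_of_maps_to hE _ fun n hn => ?_
  exact (card_le_card_divisors_pow (ne_of_mem_of_not_mem hn hI)
    fun d hd => (mem_filter.mp hd).2).trans (Nat.pow_le_pow_left (hD n hn) _)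

end DivisorBound

section ShortRegime

variable {k x H D : ℕ}

lemma card_filter_dvd_mul_le {d : ℕ} (hd : 0 < d) :
    #{n ∈ Ioc x (x + H) | d ∣ n} * d ≤ H + d := by
  rw [← card_image_of_injOn (f := (· / d)) fun m hm n hn h => (Nat.div_left_inj
    (mem_filter.mp hm).2 (mem_filter.mp hn).2).mp h]
  refine card_mul_le_of_forall_mul_mem_Ioc (x := x) hd fun t ht => ?_
  obtain ⟨n, hn, rfl⟩ := mem_image.mp ht
  rw [mem_filter] at hn
  rw [Nat.div_mul_cancel hn.2]
  exact hn.1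

lemma card_piFinset_filter_dvd_mul_le {ι : Type*} [Fintype ι] [DecidableEq ι] {d : ι → ℕ}
    (hd : ∀ j, d j ∈ Icc 1 H) :
    #(Fintype.piFinset fun j => {n ∈ Ioc x (x + H) | d j ∣ n}) * ∏ j, d j ≤
      (2 * H) ^ Fintype.card ι := by
  rw [Fintype.card_piFinset, ← prod_mul_distrib, ← card_univ, ← prod_const]
  refine prod_le_prod' fun j _ => ?_
  obtain ⟨hpos, hle⟩ := mem_Icc.mp (hd j)
  exact (card_filter_dvd_mul_le hpos).trans (by lia)

/-- The factor of `q.1 a` taken from `q.2 j` divides the difference of these two distinct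
integers, so it is at most `H`. -/
lemma exists_small_factors_of_mem_disjointPairs {q : (Fin k → ℕ) × (Fin k → ℕ)}
    (hq : q ∈ disjointPairs k (Ioc x (x + H))) (a : Fin k) :
    ∃ d : Fin k → ℕ, (∀ j, d j ∈ Icc 1 H) ∧ (∀ j, d j ∣ q.2 j) ∧ ∏ j, d j = q.1 a := by
  obtain ⟨hq, hne⟩ := mem_filter.mp hq
  obtain ⟨⟨hfst, hsnd⟩, hprod⟩ := mem_equalProductPairs.mp hq
  obtain ⟨d, hdvd, hd⟩ := exists_prod_dvd_of_dvd_prod univ q.2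
    (hprod ▸ dvd_prod_of_mem _ (mem_univ a))
  refine ⟨d, fun j => mem_Icc.mpr ?_, fun j => hdvd j (mem_univ j), hd⟩
  have hdvd_snd := hdvd j (mem_univ j)
  have hdvd_fst : d j ∣ q.1 a := hd ▸ dvd_prod_of_mem _ (mem_univ j)
  have hfst_mem := mem_Ioc.mp (hfst a)
  have hsnd_mem := mem_Ioc.mp (hsnd j)
  refine ⟨Nat.pos_of_dvd_of_pos hdvd_snd (by lia), ?_⟩
  rcases (hne a j).lt_or_gt with h | h
  · have := Nat.le_of_dvd (by lia) (Nat.dvd_sub hdvd_snd hdvd_fst)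
    lia
  · have := Nat.le_of_dvd (by lia) (Nat.dvd_sub hdvd_fst hdvd_snd)
    lia

lemma card_image_snd_disjointPairs_mul_le (hk : 0 < k)
    (hD : ∀ n ∈ Ioc x (x + H), #n.divisors ≤ D) :
    #((disjointPairs k (Ioc x (x + H))).image Prod.snd) * x ≤ D ^ k * H * (2 * H) ^ k := by
  set I := Ioc x (x + H)
  set E := {d ∈ Fintype.piFinset fun _ : Fin k => Icc 1 H | ∏ j, d j ∈ I}
  set multiples := fun d : Fin k → ℕ => Fintype.piFinset fun j => {n ∈ I | d j ∣ n}
  have hE : #E ≤ D ^ k * H := by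
    have hI : 0 ∉ I := fun h => (mem_Ioc.mp h).1.not_ge x.zero_le
    simpa only [I, Fintype.card_fin, Nat.card_Ioc, Nat.add_sub_cancel_left] using
      card_le_pow_mul_card_of_forall_prod_mem (E := E) hI hD fun d hd => (mem_filter.mp hd).2
  have hsub : (disjointPairs k I).image Prod.snd ⊆ E.biUnion multiples := fun n hn => by
    obtain ⟨q, hq, rfl⟩ := mem_image.mp hn
    obtain ⟨d, hdH, hdvd, hprod⟩ := exists_small_factors_of_mem_disjointPairs hq ⟨0, hk⟩
    have hqI := (mem_equalProductPairs.mp (mem_filter.mp hq).1).1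
    exact mem_biUnion.mpr ⟨d, mem_filter.mpr ⟨Fintype.mem_piFinset.mpr hdH, hprod ▸ hqI.1 _⟩,
      Fintype.mem_piFinset.mpr fun j => mem_filter.mpr ⟨hqI.2 j, hdvd j⟩⟩
  calc #((disjointPairs k I).image Prod.snd) * x ≤ (∑ d ∈ E, #(multiples d)) * x := by
        gcongr
        exact (card_le_card hsub).trans card_biUnion_le
    _ = ∑ d ∈ E, #(multiples d) * x := sum_mul _ _ _
    _ ≤ ∑ d ∈ E, (2 * H) ^ k := sum_le_sum fun d hd => by
        obtain ⟨hdH, hdI⟩ := mem_filter.mp hd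
        refine (Nat.mul_le_mul_left _ (mem_Ioc.mp hdI).1.le).trans ?_
        simpa only [Fintype.card_fin] using
          card_piFinset_filter_dvd_mul_le (x := x) (Fintype.mem_piFinset.mp hdH)
    _ ≤ D ^ k * H * (2 * H) ^ k := by
        rw [sum_const, smul_eq_mul]
        gcongr

lemma card_le_pow_mul_card_image_snd {N : ℕ} {S : Finset ((Fin k → ℕ) × (Fin k → ℕ))}
    (hS : S ⊆ equalProductPairs k (Icc 1 N)) (hD : ∀ n ∈ Icc 1 (N ^ k), #n.divisors ≤ D) :
    #S ≤ D ^ k * #(S.image Prod.snd) := by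
  refine card_le_mul_card_image _ _ fun n hn => ?_
  obtain ⟨q, hq, rfl⟩ := mem_image.mp hn
  have hsnd (i : Fin k) := mem_Icc.mp ((mem_equalProductPairs.mp (hS hq)).1.2 i)
  have hpos : 0 < ∏ i, q.2 i := prod_pos fun i _ => (hsnd i).1
  have hle : ∏ i, q.2 i ≤ N ^ k := (prod_le_prod' fun i _ => (hsnd i).2).trans_eq (by simp)
  set fibre := {q' ∈ S | q'.2 = q.2}
  have hinj : Set.InjOn Prod.fst (fibre : Set ((Fin k → ℕ) × (Fin k → ℕ))) :=
    fun a ha b hb hab => Prod.ext hab ((mem_filter.mp ha).2.trans (mem_filter.mp hb).2.symm)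
  have hprod (d) (hd : d ∈ fibre.image Prod.fst) : ∏ i, d i = ∏ i, q.2 i := by
    obtain ⟨q', hq', rfl⟩ := mem_image.mp hd
    obtain ⟨hq', heq⟩ := mem_filter.mp hq'
    rw [(mem_equalProductPairs.mp (hS hq')).2, heq]
  calc #fibre = #(fibre.image Prod.fst) := (card_image_of_injOn hinj).symm
    _ ≤ #(∏ i, q.2 i).divisors ^ k := by
      simpa using card_le_card_divisors_pow hpos.ne' hprod
    _ ≤ D ^ k := Nat.pow_le_pow_left (hD _ (mem_Icc.mpr ⟨hpos, hle⟩)) k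

lemma card_disjointPairs_mul_le (hk : 0 < k)
    (hD : ∀ n ∈ Icc 1 ((x + H) ^ k), #n.divisors ≤ D) :
    #(disjointPairs k (Ioc x (x + H))) * x ≤ D ^ (2 * k) * H * (2 * H) ^ k := by
  have hD' (n : ℕ) (hn : n ∈ Ioc x (x + H)) : #n.divisors ≤ D := by
    obtain ⟨hpos, hle⟩ := mem_Icc.mp (Ioc_add_subset_Icc_one x H hn)
    exact hD n (mem_Icc.mpr ⟨hpos, hle.trans (Nat.le_self_pow hk.ne' _)⟩)
  calc #(disjointPairs k (Ioc x (x + H))) * x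
      ≤ D ^ k * #((disjointPairs k (Ioc x (x + H))).image Prod.snd) * x := by
        gcongr
        exact card_le_pow_mul_card_image_snd ((filter_subset _ _).trans
          (equalProductPairs_mono k (Ioc_add_subset_Icc_one x H))) hD
    _ = D ^ k * (#((disjointPairs k (Ioc x (x + H))).image Prod.snd) * x) := mul_assoc _ _ _
    _ ≤ D ^ k * (D ^ k * H * (2 * H) ^ k) :=
        Nat.mul_le_mul_left _ (card_image_snd_disjointPairs_mul_le hk hD')
    _ = D ^ (2 * k) * H * (2 * H) ^ k := by ring

end ShortRegime

section ShortRegimeBound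

variable {k : ℕ}

lemma exists_card_divisors_le_and_pow_le (hk : 0 < k) :
    ∃ C > 0, ∀ N > 0, ∃ D : ℕ, (∀ n ∈ Icc 1 (N ^ k), #n.divisors ≤ D) ∧
      D ^ (4 * k ^ 2) ≤ C * N := by
  obtain ⟨C, hC0, hC⟩ := exists_card_divisors_pow_le (4 * k ^ 3)
  refine ⟨C, hC0, fun N hN => ?_⟩
  obtain ⟨m, hm, hmax⟩ := exists_max_image (Icc 1 (N ^ k)) (fun n => #n.divisors)
    ⟨1, mem_Icc.mpr ⟨le_rfl, Nat.one_le_pow _ _ hN⟩⟩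
  obtain ⟨hm1, hmN⟩ := mem_Icc.mp hm
  refine ⟨#m.divisors, hmax, (Nat.pow_le_pow_iff_left hk.ne').mp ?_⟩
  calc (#m.divisors ^ (4 * k ^ 2)) ^ k = #m.divisors ^ (4 * k ^ 3) := by rw [← pow_mul]; ring_nf
    _ ≤ C * m := hC m (Nat.one_le_iff_ne_zero.mp hm1)
    _ ≤ C ^ k * N ^ k := Nat.mul_le_mul (Nat.le_self_pow hk.ne' C) hmN
    _ = (C * N) ^ k := (mul_pow _ _ _).symm

lemma pow_mul_le_of_mul_pow_le {x H D M : ℕ} (hk : 0 < k) (hx : 0 < x)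
    (hxH : x * H ^ k ≤ x ^ k) (hD : D ^ (4 * k ^ 2) ≤ M * x) : D ^ (4 * k) * H ≤ M * x := by
  refine (Nat.pow_le_pow_iff_left hk.ne').mp (Nat.le_of_mul_le_mul_right (c := x) ?_ hx)
  calc (D ^ (4 * k) * H) ^ k * x = D ^ (4 * k ^ 2) * (x * H ^ k) := by
        rw [mul_pow, ← pow_mul]; ring_nf
    _ ≤ M * x * x ^ k := Nat.mul_le_mul hD hxH
    _ ≤ M ^ k * x * x ^ k := by gcongr; exact Nat.le_self_pow hk.ne' M
    _ = (M * x) ^ k * x := by rw [mul_pow]; ring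

lemma exists_card_disjointPairs_le_of_short (hk : 0 < k) :
    ∃ C : ℝ, 0 ≤ C ∧ ∀ x H : ℕ, 0 < x → H ≤ x → x * H ^ k ≤ x ^ k →
      (#(disjointPairs k (Ioc x (x + H))) : ℝ) ≤ C * (H ^ k * (√H / √x)) := by
  obtain ⟨C, -, hC⟩ := exists_card_divisors_le_and_pow_le hk
  refine ⟨2 ^ k * √(C * 2), by positivity, fun x H hx hHx hxH => ?_⟩
  obtain ⟨D, hdiv, hD⟩ := hC (x + H) (by lia)
  have hDH : (D : ℝ) ^ (4 * k) * H ≤ C * 2 * x := by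
    exact_mod_cast pow_mul_le_of_mul_pow_le hk hx hxH
      (hD.trans (by rw [mul_assoc]; exact Nat.mul_le_mul_left C (by lia)))
  have hsqrt : (D : ℝ) ^ (2 * k) * √H ≤ √(C * 2) * √x := by
    rw [← Real.sqrt_mul (by positivity)]
    refine Real.le_sqrt_of_sq_le ?_
    rw [mul_pow, Real.sq_sqrt (Nat.cast_nonneg H), ← pow_mul]
    exact (by ring_nf : (D : ℝ) ^ (2 * k * 2) * H = D ^ (4 * k) * H).trans_le hDH
  have hcard : (#(disjointPairs k (Ioc x (x + H))) : ℝ) * x ≤ D ^ (2 * k) * H * (2 * H) ^ k := by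
    exact_mod_cast card_disjointPairs_mul_le hk hdiv
  have hx0 : (0 : ℝ) < x := by exact_mod_cast hx
  refine le_of_mul_le_mul_right ?_ hx0
  calc (#(disjointPairs k (Ioc x (x + H))) : ℝ) * x
      ≤ D ^ (2 * k) * (√H * √H) * (2 * H) ^ k := by
        rwa [Real.mul_self_sqrt (Nat.cast_nonneg H)]
    _ = D ^ (2 * k) * √H * (√H * (2 * H) ^ k) := by ring
    _ ≤ √(C * 2) * √x * (√H * (2 * H) ^ k) := by gcongr
    _ = 2 ^ k * √(C * 2) * (H ^ k * (√H / √x)) * (√x * √x) := by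
        have : 0 < √(x : ℝ) := Real.sqrt_pos.mpr hx0
        rw [mul_pow]
        field_simp
    _ = 2 ^ k * √(C * 2) * (H ^ k * (√H / √x)) * x := by rw [Real.mul_self_sqrt hx0.le]

end ShortRegimeBound

section Assembly

/-- The order of magnitude, relative to `H ^ k`, of the number of pairs of `k`-tuples in
`(x, x + H]` with equal products that are not permutations of each other. The logarithms of the
final estimate are still a harmonic number here. -/
noncomputable def offDiagonalBound (k x H : ℕ) : ℝ :=
  √H / √(max x H : ℕ) + H / (max x H : ℕ) * (harmonic (x + H) : ℝ) ^ (2 * k ^ 2)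

lemma offDiagonalBound_mono {k l x H : ℕ} (hkl : k ≤ l) (hH : 0 < H) :
    offDiagonalBound k x H ≤ offDiagonalBound l x H := by
  have := one_le_harmonic (show 1 ≤ x + H by lia)
  unfold offDiagonalBound
  gcongr

lemma sqrt_div_sqrt_le_offDiagonalBound (k x H : ℕ) (hH : 0 < H) :
    √H / √(max x H : ℕ) ≤ offDiagonalBound k x H := by
  have := one_le_harmonic (show 1 ≤ x + H by lia)
  exact le_add_of_nonneg_right (by positivity)

lemma div_mul_harmonic_pow_le_offDiagonalBound (k x H : ℕ) :
    H / (max x H : ℕ) * (harmonic (x + H) : ℝ) ^ (2 * k ^ 2) ≤ offDiagonalBound k x H :=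
  le_add_of_nonneg_left (by positivity)

lemma card_disjointPairs_le_of_le {k x H : ℕ} (hH : 0 < H) (hxH : x ≤ H) :
    (#(disjointPairs k (Ioc x (x + H))) : ℝ) ≤ 2 ^ k * (H ^ k * offDiagonalBound k x H) := by
  have hL := one_le_harmonic (show 1 ≤ x + H by lia)
  have hsub : disjointPairs k (Ioc x (x + H)) ⊆ equalProductPairs k (Icc 1 (x + H)) :=
    (filter_subset _ _).trans (equalProductPairs_mono k (Ioc_add_subset_Icc_one x H))
  have hpow : (harmonic (x + H) : ℝ) ^ k ^ 2 ≤ offDiagonalBound k x H := by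
    refine le_trans ?_ (div_mul_harmonic_pow_le_offDiagonalBound k x H)
    rw [max_eq_right hxH, div_self (by positivity), one_mul]
    exact pow_le_pow_right₀ hL (by lia)
  calc (#(disjointPairs k (Ioc x (x + H))) : ℝ)
      ≤ ((x + H : ℕ) : ℝ) ^ k * (harmonic (x + H) : ℝ) ^ k ^ 2 :=
        (Nat.cast_le.mpr (card_le_card hsub)).trans (card_equalProductPairs_Icc_le k (x + H))
    _ ≤ ((2 * H : ℕ) : ℝ) ^ k * offDiagonalBound k x H := by gcongr; lia
    _ = 2 ^ k * (H ^ k * offDiagonalBound k x H) := by push_cast; ring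

lemma exists_card_disjointPairs_succ_le (n : ℕ) :
    ∃ C : ℝ, 0 ≤ C ∧ ∀ x H : ℕ, 0 < x → 0 < H →
      (#(disjointPairs (n + 1) (Ioc x (x + H))) : ℝ) ≤
        C * (H ^ (n + 1) * offDiagonalBound (n + 1) x H) := by
  obtain ⟨C, -, hC⟩ := exists_card_disjointPairs_le_of_short n.succ_pos
  set B : ℝ := 6 ^ (n + 2) * (n + 1) ^ (n + 3)
  refine ⟨max (2 ^ (n + 1)) (max B C), by positivity, fun x H hx hH => ?_⟩
  have := one_le_harmonic (show 1 ≤ x + H by lia)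
  have hsqrt := sqrt_div_sqrt_le_offDiagonalBound (n + 1) x H hH
  have hlog := div_mul_harmonic_pow_le_offDiagonalBound (n + 1) x H
  have hbound : 0 ≤ offDiagonalBound (n + 1) x H := le_trans (by positivity) hsqrt
  rcases le_or_gt x H with hxH | hHx
  · exact (card_disjointPairs_le_of_le hH hxH).trans (by gcongr; exact le_max_left _ _)
  rw [max_eq_left hHx.le] at hsqrt hlog
  rcases le_total (x ^ (n + 1)) (x * H ^ (n + 1)) with hlong | hshort
  · calc (#(disjointPairs (n + 1) (Ioc x (x + H))) : ℝ)
        ≤ B * (H ^ (n + 1) * (H / x * (harmonic (x + H) : ℝ) ^ (2 * (n + 1) ^ 2))) :=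
          (card_disjointPairs_le_of_long n hx hH hHx.le hlong).trans_eq (mul_assoc _ _ _)
      _ ≤ _ := by gcongr; exact (le_max_left _ _).trans (le_max_right _ _)
  · calc (#(disjointPairs (n + 1) (Ioc x (x + H))) : ℝ)
        ≤ C * (H ^ (n + 1) * (√H / √x)) := hC x H hx hHx.le hshort
      _ ≤ _ := by gcongr; exact (le_max_right _ _).trans (le_max_right _ _)

lemma exists_card_nonPermPairs_le (k : ℕ) :
    ∃ C : ℝ, 0 ≤ C ∧ ∀ x H : ℕ, 0 < x → 0 < H →
      (#(nonPermPairs k (Ioc x (x + H))) : ℝ) ≤ C * (H ^ k * offDiagonalBound k x H) := by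
  induction k with
  | zero => exact ⟨0, le_rfl, fun x H _ _ => by simp [nonPermPairs_zero]⟩
  | succ k ih =>
    obtain ⟨C, hC0, hC⟩ := ih
    obtain ⟨C', hC'0, hC'⟩ := exists_card_disjointPairs_succ_le k
    refine ⟨C' + (k + 1) ^ 2 * C, by positivity, fun x H hx hH => ?_⟩
    have hI : 0 ∉ Ioc x (x + H) := fun h => (mem_Ioc.mp h).1.not_ge x.zero_le
    have hrec : (#(nonPermPairs (k + 1) (Ioc x (x + H))) : ℝ) ≤
        #(disjointPairs (k + 1) (Ioc x (x + H))) +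
          (k + 1) ^ 2 * (H * #(nonPermPairs k (Ioc x (x + H)))) := by
      have := card_nonPermPairs_succ_le k hI
      rw [Nat.card_Ioc, Nat.add_sub_cancel_left] at this
      exact_mod_cast this
    calc (#(nonPermPairs (k + 1) (Ioc x (x + H))) : ℝ)
        ≤ C' * (H ^ (k + 1) * offDiagonalBound (k + 1) x H) +
          (k + 1) ^ 2 * (H * (C * (H ^ k * offDiagonalBound (k + 1) x H))) := by
          refine hrec.trans ?_
          gcongr
          · exact hC' x H hx hH
          · refine (hC x H hx hH).trans ?_
            gcongr
            exact offDiagonalBound_mono k.le_succ hH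
      _ = (C' + (k + 1) ^ 2 * C) * (H ^ (k + 1) * offDiagonalBound (k + 1) x H) := by ring

lemma harmonic_add_le_two_add_log {x H : ℕ} (hx : 0 < x) (hH : 0 < H) :
    (harmonic (x + H) : ℝ) ≤ 2 + (Real.log x + Real.log H) := by
  have hle : ((x + H : ℕ) : ℝ) ≤ 2 * (x * H) := by
    exact_mod_cast (by nlinarith : x + H ≤ 2 * (x * H))
  have hlog : Real.log ((x + H : ℕ) : ℝ) ≤ Real.log 2 + (Real.log x + Real.log H) := by
    rw [← Real.log_mul (by positivity) (by positivity), ← Real.log_mul two_ne_zero (by positivity)]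
    exact Real.log_le_log (by positivity) hle
  linarith [harmonic_le_one_add_log (x + H), Real.log_two_lt_d9]

lemma harmonic_add_pow_le {x H m n : ℕ} (hx : 0 < x) (hH : 0 < H) (hmn : m ≤ n) :
    (harmonic (x + H) : ℝ) ^ m ≤ 4 ^ n * (1 + (Real.log x + Real.log H) ^ n) := by
  set ℓ := Real.log x + Real.log H
  have hL := one_le_harmonic (show 1 ≤ x + H by lia)
  have hℓ : 0 ≤ ℓ := add_nonneg (Real.log_natCast_nonneg x) (Real.log_natCast_nonneg H)
  calc (harmonic (x + H) : ℝ) ^ m ≤ (harmonic (x + H) : ℝ) ^ n := pow_le_pow_right₀ hL hmn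
    _ ≤ (2 + ℓ) ^ n := by gcongr; exact harmonic_add_le_two_add_log hx hH
    _ ≤ 2 ^ (n - 1) * (2 ^ n + ℓ ^ n) := add_pow_le zero_le_two hℓ n
    _ ≤ 2 ^ n * (2 ^ n + 2 ^ n * ℓ ^ n) := by
        gcongr
        · exact one_le_two
        · exact n.sub_le 1
        · exact le_mul_of_one_le_left (by positivity) (one_le_pow₀ one_le_two)
    _ = 4 ^ n * (1 + ℓ ^ n) := by
        rw [show (4 : ℝ) = 2 * 2 by norm_num, mul_pow]
        ring

lemma div_le_sqrt_div_sqrt {a b : ℝ} (ha : 0 ≤ a) (hab : a ≤ b) : a / b ≤ √a / √b := by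
  rw [← Real.sqrt_div ha]
  exact Real.le_sqrt_of_sq_le (pow_le_of_le_one (div_nonneg ha (ha.trans hab))
    (div_le_one_of_le₀ hab (ha.trans hab)) two_ne_zero)

lemma offDiagonalBound_le (k : ℕ) {x H : ℕ} (hx : 0 < x) (hH : 0 < H) :
    offDiagonalBound k x H ≤ (1 + 4 ^ (2 * k ^ 2 + 2)) * (√H / √(max x H : ℕ) +
      H * (Real.log x + Real.log H) ^ (2 * k ^ 2 + 2) / (max x H : ℕ)) := by
  set m : ℝ := ((max x H : ℕ) : ℝ)
  set ℓ := (Real.log x + Real.log H) ^ (2 * k ^ 2 + 2)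
  have : 0 ≤ ℓ := by
    have := Real.log_natCast_nonneg x
    have := Real.log_natCast_nonneg H
    positivity
  have hdiv : H / m ≤ √H / √m :=
    div_le_sqrt_div_sqrt (Nat.cast_nonneg H) (Nat.cast_le.mpr (le_max_right x H))
  calc offDiagonalBound k x H ≤ √H / √m + H / m * (4 ^ (2 * k ^ 2 + 2) * (1 + ℓ)) := by
        unfold offDiagonalBound
        gcongr
        exact harmonic_add_pow_le hx hH (Nat.le_add_right _ 2)
    _ = √H / √m + 4 ^ (2 * k ^ 2 + 2) * (H / m + H * ℓ / m) := by ring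
    _ ≤ √H / √m + H * ℓ / m + 4 ^ (2 * k ^ 2 + 2) * (√H / √m + H * ℓ / m) := by
        refine add_le_add (le_add_of_nonneg_right (by positivity)) ?_
        exact mul_le_mul_of_nonneg_left (add_le_add_left hdiv _) (by positivity)
    _ = (1 + 4 ^ (2 * k ^ 2 + 2)) * (√H / √m + H * ℓ / m) := by ring

lemma exists_card_nonPermPairs_div_le (k : ℕ) :
    ∃ C : ℝ, 0 ≤ C ∧ ∀ x H : ℕ, 0 < x → 0 < H →
      (#(nonPermPairs k (Ioc x (x + H))) : ℝ) / H ^ k ≤ C * (√H / √(max x H : ℕ) +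
        H * (Real.log x + Real.log H) ^ (2 * k ^ 2 + 2) / (max x H : ℕ)) := by
  obtain ⟨C, hC0, hC⟩ := exists_card_nonPermPairs_le k
  refine ⟨C * (1 + 4 ^ (2 * k ^ 2 + 2)), by positivity, fun x H hx hH => ?_⟩
  calc (#(nonPermPairs k (Ioc x (x + H))) : ℝ) / H ^ k ≤ C * offDiagonalBound k x H := by
        rw [div_le_iff₀ (by positivity)]
        exact (hC x H hx hH).trans_eq (by ring)
    _ ≤ _ := by
        rw [mul_assoc]
        gcongr
        exact offDiagonalBound_le k hx hH

end Assembly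

/-- for every `k ≥ 1` there is `C_k > 0` such that for all integers
`x, H ≥ 1`, the Steinhaus expectation at level `y = x + H` satisfies
`|𝔼_f |H^{-1/2} ∑_{x<n≤x+H} f(n)|^{2k} − k!|
  ≤ C_k·(H^{-1} + H^{1/2}/max(x,H)^{1/2} + H·(log x + log H)^{2k²+2}/max(x,H))`. -/
theorem stmt0 (k : ℕ) (hk : 1 ≤ k) :
    ∃ C : ℝ, 0 < C ∧ ∀ x H : ℕ, 1 ≤ x → 1 ≤ H →
      |(∫ ω, ‖((Real.sqrt H : ℂ))⁻¹ *
            ∑ n ∈ Finset.Ioc x (x + H), steinhausF (x + H) ω n‖ ^ (2 * k)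
          ∂(steinhausMeasure (x + H))) - (k.factorial : ℝ)| ≤
        C * ((H : ℝ)⁻¹ + Real.sqrt (H : ℝ) / Real.sqrt ((max x H : ℕ) : ℝ)
          + (H : ℝ) * (Real.log x + Real.log H) ^ (2 * k ^ 2 + 2) / ((max x H : ℕ) : ℝ)) := by
  obtain ⟨K, hK, hnonPerm⟩ := exists_card_nonPermPairs_div_le k
  refine ⟨k.factorial * k ^ 2 + K, by positivity, fun x H hx hH => ?_⟩
  have hcount := abs_card_equalProductPairs_div_sub_factorial_le k
    (nonempty_Ioc.mpr (Nat.lt_add_of_pos_right (n := x) hH))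
  rw [Nat.card_Ioc, Nat.add_sub_cancel_left] at hcount
  rw [integral_norm_inv_sqrt_mul_sum_steinhausF_pow, add_assoc]
  set R : ℝ := √H / √(max x H : ℕ) +
    H * (Real.log x + Real.log H) ^ (2 * k ^ 2 + 2) / (max x H : ℕ)
  have hR : 0 ≤ R := by
    have := Real.log_natCast_nonneg x
    have := Real.log_natCast_nonneg H
    positivity
  have hH_inv : (0 : ℝ) ≤ (H : ℝ)⁻¹ := by positivity
  calc _ ≤ k.factorial * k ^ 2 * (H : ℝ)⁻¹ + K * R :=
        hcount.trans (add_le_add_right (hnonPerm x H hx hH) _)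
    _ ≤ k.factorial * k ^ 2 * ((H : ℝ)⁻¹ + R) + K * ((H : ℝ)⁻¹ + R) := by gcongr <;> linarith
    _ = (k.factorial * k ^ 2 + K) * ((H : ℝ)⁻¹ + R) := (add_mul _ _ _).symm
end

section
/- For every integer k ≥ 1 there exists a constant C_k > 0 (depending only on k) such that for all integers x ≥ 1 and H ≥ 1, the number of 2k-tuples (n₁, n₂, …, n_{2k}) of integers with x < n_i ≤ x+H for all i and n₁n₂⋯n_k = n_{k+1}n_{k+2}⋯n_{2k} differs from k!·H^k by at most C_k · ( H^{k−1} + H^{k+1/2} / max(x,H)^{1/2} + H^{k+1} · (log x + log H)^{2k²+2} / max(x,H) ), where log denotes the natural logarithm. -/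
/-!
The `k! · H ^ k + O(H ^ (k - 1))` solutions in which one side rearranges the other give the main
term. In any other solution, cancelling common entries leaves a solution whose two sides share no
entry. A common refinement of its two products is a matrix with row products `n i` and column
products `m j`; every entry `d j` of its first row divides the nonzero difference `n 0 - m j`, so
`d j ≤ H`. Once this row is known, the rest of column `j` has product in an interval of length about
`H / d j`. The `r`-tuples with product in `(y, y + h]` are counted by choosing the largest entry
last when `h ^ r ≥ y ^ (r - 1)`, which costs powers of a logarithm, and by the divisor bound
otherwise, which costs a small power of `y / h`. Summing over the first row, whose product `n 0`
itself lies in `(x, x + H]`, gains the factor `H / max x H`.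
-/

/-- The number of `2k`-tuples `(n₁,…,n_{2k}) ∈ ((x, x+H] ∩ ℤ)^{2k}` with
`n₁⋯n_k = n_{k+1}⋯n_{2k}` (here `p.1 i = n_i`, `p.2 i = n_{k+i}`). -/
noncomputable def eqProdCount (k x H : ℕ) : ℕ :=
  Nat.card {p : (Fin k → ℕ) × (Fin k → ℕ) //
    (∀ i, p.1 i ∈ Finset.Ioc x (x + H)) ∧ (∀ i, p.2 i ∈ Finset.Ioc x (x + H)) ∧
    (∏ i, p.1 i) = (∏ i, p.2 i)}

namespace EqualProducts

open Finset

section CommonRefinement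

variable {M ι κ : Type*}

theorem exists_prod_eq_of_dvd_prod [CommMonoid M] [DecompositionMonoid M] [Subsingleton Mˣ]
    {t : Finset κ} {m : κ → M} {a : M} (h : a ∣ ∏ j ∈ t, m j) :
    ∃ d : κ → M, (∀ j ∈ t, d j ∣ m j) ∧ ∏ j ∈ t, d j = a := by
  classical
  induction t using Finset.cons_induction generalizing a with
  | empty => exact ⟨1, by simp, (isUnit_iff_eq_one.1 (isUnit_of_dvd_one (by simpa using h))).symm⟩
  | cons j t hj ih =>
    rw [prod_cons] at h
    obtain ⟨b, c, hb, hc, rfl⟩ := exists_dvd_and_dvd_of_dvd_mul h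
    obtain ⟨d, hd, rfl⟩ := ih hc
    have hne : ∀ i ∈ t, i ≠ j := fun i hi => ne_of_mem_of_not_mem hi hj
    refine ⟨Function.update d j b, ?_, ?_⟩
    · refine (forall_mem_cons _ _).2 ⟨by simpa using hb, fun i hi => ?_⟩
      simpa [hne i hi] using hd i hi
    · rw [prod_cons, Function.update_self]
      exact congrArg (b * ·) (prod_congr rfl fun i hi => Function.update_of_ne (hne i hi) _ _)

theorem exists_common_refinement_of_prod_eq_prod [CommMonoidWithZero M] [IsCancelMulZero M]
    [DecompositionMonoid M] [Subsingleton Mˣ] {s : Finset ι} {t : Finset κ} {n : ι → M} {m : κ → M}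
    (hn : ∀ i ∈ s, n i ≠ 0) (h : ∏ i ∈ s, n i = ∏ j ∈ t, m j) :
    ∃ A : ι → κ → M, (∀ i ∈ s, ∏ j ∈ t, A i j = n i) ∧ ∀ j ∈ t, ∏ i ∈ s, A i j = m j := by
  classical
  induction s using Finset.cons_induction generalizing m with
  | empty =>
    have hm : ∀ j ∈ t, m j = 1 := prod_eq_one_iff.1 (by simpa using h.symm)
    exact ⟨1, by simp, fun j hj => by simp [hm j hj]⟩
  | cons i s hi ih =>
    rw [prod_cons] at h
    obtain ⟨hni, hns⟩ := (forall_mem_cons _ _).1 hn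
    obtain ⟨d, hd, hdn⟩ := exists_prod_eq_of_dvd_prod ⟨_, h.symm⟩
    choose! q hq using hd
    have hqn : ∏ i ∈ s, n i = ∏ j ∈ t, q j := by
      refine mul_left_cancel₀ hni (h.trans ?_)
      rw [prod_congr rfl hq, prod_mul_distrib, hdn]
    obtain ⟨A, hAn, hAq⟩ := ih hns hqn
    have hne : ∀ i' ∈ s, i' ≠ i := fun i' hi' => ne_of_mem_of_not_mem hi' hi
    refine ⟨Function.update A i d, ?_, fun j hj => ?_⟩
    · refine (forall_mem_cons _ _).2 ⟨by simpa using hdn, fun i' hi' => ?_⟩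
      simpa [hne i' hi'] using hAn i' hi'
    · rw [prod_cons, Function.update_self, hq j hj, ← hAq j hj]
      refine congrArg (d j * ·) (prod_congr rfl fun i' hi' => ?_)
      rw [Function.update_of_ne (hne i' hi')]

end CommonRefinement

section Rearrangements

variable {M : Type*}

section Pairs

variable [CommMonoid M] [DecidableEq M] (k : ℕ) (S : Finset M)

/-- The pairs of `k`-tuples of elements of `S` with equal products. -/
def equalProductPairs : Finset ((Fin k → M) × (Fin k → M)) :=
  {p ∈ (Fintype.piFinset fun _ => S) ×ˢ (Fintype.piFinset fun _ => S) |
    ∏ i, p.1 i = ∏ i, p.2 i}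

/-- The trivial solutions: the second tuple rearranges the first. -/
def permPairs : Finset ((Fin k → M) × (Fin k → M)) :=
  {p ∈ equalProductPairs k S | ∃ σ : Equiv.Perm (Fin k), p.2 = p.1 ∘ σ}

/-- The nontrivial solutions: the second tuple does not rearrange the first. -/
def nonPermPairs : Finset ((Fin k → M) × (Fin k → M)) :=
  {p ∈ equalProductPairs k S | ¬ ∃ σ : Equiv.Perm (Fin k), p.2 = p.1 ∘ σ}

/-- The solutions whose two tuples have no entry in common; removing common entries one at a time
reduces every nontrivial solution to such a one. -/
def disjointPairs : Finset ((Fin k → M) × (Fin k → M)) :=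
  {p ∈ equalProductPairs k S | ∀ i j, p.1 i ≠ p.2 j}

variable {k S}

theorem mem_equalProductPairs {p : (Fin k → M) × (Fin k → M)} :
    p ∈ equalProductPairs k S ↔
      (∀ i, p.1 i ∈ S) ∧ (∀ i, p.2 i ∈ S) ∧ ∏ i, p.1 i = ∏ i, p.2 i := by
  simp [equalProductPairs, and_assoc]

theorem card_permPairs_add_card_nonPermPairs :
    #(permPairs k S) + #(nonPermPairs k S) = #(equalProductPairs k S) :=
  card_filter_add_card_filter_not _

theorem card_permPairs_le : #(permPairs k S) ≤ k.factorial * #S ^ k := by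
  have hsub : permPairs k S ⊆ ((univ : Finset (Equiv.Perm (Fin k))) ×ˢ
      Fintype.piFinset fun _ : Fin k => S).image fun q => (q.2, q.2 ∘ q.1) := by
    rintro ⟨n, m⟩ hp
    obtain ⟨hp, σ, hσ⟩ := mem_filter.1 hp
    have hn : n ∈ Fintype.piFinset fun _ => S :=
      Fintype.mem_piFinset.2 (mem_equalProductPairs.1 hp).1
    exact mem_image.2 ⟨(σ, n), mem_product.2 ⟨mem_univ _, hn⟩, Prod.ext rfl hσ.symm⟩
  calc #(permPairs k S) ≤ #((univ : Finset (Equiv.Perm (Fin k))) ×ˢ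
        Fintype.piFinset fun _ : Fin k => S) := (card_le_card hsub).trans card_image_le
    _ = k.factorial * #S ^ k := by simp [Fintype.card_perm]

theorem factorial_mul_descFactorial_le_card_permPairs :
    k.factorial * (#S).descFactorial k ≤ #(permPairs k S) := by
  calc k.factorial * (#S).descFactorial k
      = #(univ : Finset ((Fin k ↪ S) × Equiv.Perm (Fin k))) := by
        simp [Fintype.card_perm, mul_comm]
    _ ≤ #(permPairs k S) := by
      refine card_le_card_of_injOn (fun q => ((fun i => (q.1 i : M)), fun i => (q.1 (q.2 i) : M)))
        ?_ ?_
      · rintro ⟨f, σ⟩ -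
        refine mem_coe.2 (mem_filter.2 ⟨mem_equalProductPairs.2
          ⟨fun i => (f i).2, fun i => (f _).2, ?_⟩, σ, rfl⟩)
        exact (Equiv.prod_comp σ fun i => (f i : M)).symm
      · rintro ⟨f, σ⟩ - ⟨g, τ⟩ - h
        obtain ⟨hfg, hστ⟩ := Prod.ext_iff.1 h
        obtain rfl : f = g := DFunLike.ext _ _ fun i => Subtype.ext (congrFun hfg i)
        exact Prod.ext rfl (Equiv.ext fun i => f.injective (Subtype.ext (congrFun hστ i)))

theorem nonPermPairs_singleton (a : M) : nonPermPairs k {a} = ∅ := by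
  refine filter_eq_empty_iff.2 fun p hp => not_not.2 ⟨1, funext fun i => ?_⟩
  obtain ⟨hn, hm, -⟩ := mem_equalProductPairs.1 hp
  exact (mem_singleton.1 (hm i)).trans (mem_singleton.1 (hn i)).symm

end Pairs

theorem pow_le_descFactorial_add (n k : ℕ) :
    n ^ k ≤ n.descFactorial k + k.choose 2 * n ^ (k - 1) := by
  induction k with
  | zero => simp
  | succ k ih =>
    have hchoose : k.choose 2 * n ^ (k - 1) * n = k.choose 2 * n ^ k := by
      rcases k with - | k
      · simp
      · rw [mul_assoc, Nat.add_sub_cancel, pow_succ]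
    have hfactor : n * n.descFactorial k ≤ n.descFactorial (k + 1) + k * n ^ k :=
      calc n * n.descFactorial k ≤ (n - k + k) * n.descFactorial k := by gcongr; omega
        _ = n.descFactorial (k + 1) + k * n.descFactorial k := by
          rw [add_mul, Nat.descFactorial_succ]
        _ ≤ n.descFactorial (k + 1) + k * n ^ k := by gcongr; exact Nat.descFactorial_le_pow n k
    calc n ^ (k + 1) ≤ (n.descFactorial k + k.choose 2 * n ^ (k - 1)) * n := by
          rw [pow_succ]; gcongr
      _ = n * n.descFactorial k + k.choose 2 * n ^ k := by rw [add_mul, hchoose, mul_comm n]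
      _ ≤ n.descFactorial (k + 1) + k * n ^ k + k.choose 2 * n ^ k := by gcongr
      _ = n.descFactorial (k + 1) + (k + 1).choose 2 * n ^ (k + 1 - 1) := by
        rw [Nat.choose_succ_succ' k 1, Nat.choose_one_right, Nat.add_sub_cancel]; ring

theorem abs_card_equalProductPairs_sub_le [CommMonoid M] [DecidableEq M] (k : ℕ) (S : Finset M) :
    |(#(equalProductPairs k S) : ℝ) - k.factorial * (#S : ℝ) ^ k| ≤
      k.factorial * k.choose 2 * (#S : ℝ) ^ (k - 1) + #(nonPermPairs k S) := by
  have hcard : (#(equalProductPairs k S) : ℝ) = #(permPairs k S) + #(nonPermPairs k S) := by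
    exact_mod_cast card_permPairs_add_card_nonPermPairs.symm
  have hupper : (#(permPairs k S) : ℝ) ≤ k.factorial * (#S : ℝ) ^ k := by
    exact_mod_cast card_permPairs_le
  have hlower : (k.factorial : ℝ) * (#S : ℝ) ^ k ≤
      #(permPairs k S) + k.factorial * k.choose 2 * (#S : ℝ) ^ (k - 1) := by
    have h := Nat.mul_le_mul_left k.factorial (pow_le_descFactorial_add (#S) k)
    rw [mul_add, ← mul_assoc] at h
    exact_mod_cast h.trans (by gcongr; exact factorial_mul_descFactorial_le_card_permPairs)
  have : (0 : ℝ) ≤ k.factorial * k.choose 2 * (#S : ℝ) ^ (k - 1) := by positivity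
  rw [hcard, abs_le]
  constructor <;> linarith [Nat.cast_nonneg (α := ℝ) #(nonPermPairs k S)]

theorem exists_perm_of_removeNth_eq {l : ℕ} {n m : Fin (l + 1) → M} {i j : Fin (l + 1)}
    (hij : n i = m j) {σ : Equiv.Perm (Fin l)} (hσ : j.removeNth m = i.removeNth n ∘ σ) :
    ∃ τ : Equiv.Perm (Fin (l + 1)), m = n ∘ τ := by
  refine ⟨(finSuccEquiv' j).trans ((Equiv.optionCongr σ).trans (finSuccEquiv' i).symm), ?_⟩
  refine funext ((Fin.forall_iff_succAbove j).2 ⟨by simpa using hij.symm, fun a => ?_⟩)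
  simpa [Fin.removeNth_apply] using congrFun hσ a

theorem card_nonPermPairs_succ_le [CommMonoidWithZero M] [IsCancelMulZero M] [DecidableEq M]
    {S : Finset M} (hS : 0 ∉ S) (l : ℕ) :
    #(nonPermPairs (l + 1) S) ≤
      #(disjointPairs (l + 1) S) + (l + 1) ^ 2 * #S * #(nonPermPairs l S) := by
  set T := ((univ : Finset (Fin (l + 1) × Fin (l + 1))) ×ˢ S) ×ˢ nonPermPairs l S with hT
  have hsub : nonPermPairs (l + 1) S ⊆ disjointPairs (l + 1) S ∪
      T.image fun q => ((q.1.1.1.insertNth q.1.2 q.2.1 : Fin (l + 1) → M),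
        (q.1.1.2.insertNth q.1.2 q.2.2 : Fin (l + 1) → M)) := by
    rintro ⟨n, m⟩ hp
    obtain ⟨hsol, hperm⟩ := mem_filter.1 hp
    by_cases hdisj : ∀ i j, n i ≠ m j
    · exact mem_union_left _ (mem_filter.2 ⟨hsol, hdisj⟩)
    push Not at hdisj
    obtain ⟨i, j, hij⟩ := hdisj
    obtain ⟨hn, hm, hprod⟩ := mem_equalProductPairs.1 hsol
    have hsol' : (i.removeNth n, j.removeNth m) ∈ equalProductPairs l S := by
      refine mem_equalProductPairs.2 ⟨fun a => hn _, fun a => hm _, ?_⟩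
      refine mul_left_cancel₀ (ne_of_mem_of_not_mem (hn i) hS) ?_
      calc n i * ∏ a, n (i.succAbove a) = ∏ a, m a := by rw [← Fin.prod_univ_succAbove]; exact hprod
        _ = n i * ∏ a, m (j.succAbove a) := by rw [hij, ← Fin.prod_univ_succAbove]
    have hperm' : ¬ ∃ σ : Equiv.Perm (Fin l), j.removeNth m = i.removeNth n ∘ σ :=
      fun ⟨_, hσ⟩ => hperm (exists_perm_of_removeNth_eq hij hσ)
    refine mem_union_right _ (mem_image.2 ⟨(((i, j), n i), (i.removeNth n, j.removeNth m)), ?_, ?_⟩)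
    · exact mem_product.2 ⟨mem_product.2 ⟨mem_univ _, hn i⟩, mem_filter.2 ⟨hsol', hperm'⟩⟩
    · refine Prod.ext (Fin.insertNth_self_removeNth i n) ?_
      simpa only [hij] using Fin.insertNth_self_removeNth j m
  calc #(nonPermPairs (l + 1) S) ≤ #(disjointPairs (l + 1) S) + #T :=
        (card_le_card hsub).trans ((card_union_le _ _).trans (by gcongr; exact card_image_le))
    _ = _ := by simp [hT, sq]

end Rearrangements

section DivisorBound

theorem natCast_add_one_le_mul_rpow {p ε : ℝ} (hp : 2 ≤ p) (hε : 0 < ε) (v : ℕ) :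
    (v : ℝ) + 1 ≤ (1 / (ε * Real.log 2) + 1) * (p ^ v) ^ ε := by
  have hlog : 0 < ε * Real.log 2 := mul_pos hε (Real.log_pos one_lt_two)
  set t := ε * Real.log 2 with ht
  calc (v : ℝ) + 1 ≤ 1 / t + v + v * t + 1 := by
        linarith [show 0 ≤ 1 / t + v * t by positivity]
    _ = (1 / t + 1) * (v * t + 1) := by field_simp; ring
    _ ≤ (1 / t + 1) * Real.exp (v * t) := by gcongr; exact Real.add_one_le_exp _
    _ = (1 / t + 1) * (2 ^ v) ^ ε := by
      rw [Real.rpow_def_of_pos (by positivity), Real.log_pow, ht]; ring_nf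
    _ ≤ (1 / t + 1) * (p ^ v) ^ ε := by gcongr

theorem natCast_add_one_le_rpow {p ε : ℝ} (hp : 0 ≤ p) (h : 2 ≤ p ^ ε) (v : ℕ) :
    (v : ℝ) + 1 ≤ (p ^ v) ^ ε :=
  calc (v : ℝ) + 1 ≤ 2 ^ v := by exact_mod_cast Nat.lt_two_pow_self
    _ ≤ (p ^ ε) ^ v := by gcongr
    _ = (p ^ v) ^ ε := Real.rpow_pow_comm hp ε v

theorem two_le_rpow_of_ceil_le {ε : ℝ} (hε : 0 < ε) {p : ℕ} (hp : ⌈(2 : ℝ) ^ (1 / ε)⌉₊ ≤ p) :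
    (2 : ℝ) ≤ (p : ℝ) ^ ε :=
  calc (2 : ℝ) = ((2 : ℝ) ^ (1 / ε)) ^ ε := by
        rw [← Real.rpow_mul zero_le_two, one_div_mul_cancel hε.ne', Real.rpow_one]
    _ ≤ (p : ℝ) ^ ε := by gcongr; exact Nat.ceil_le.1 hp

theorem exists_card_divisors_le_rpow {ε : ℝ} (hε : 0 < ε) :
    ∃ C : ℝ, 0 ≤ C ∧ ∀ n : ℕ, n ≠ 0 → (#n.divisors : ℝ) ≤ C * (n : ℝ) ^ ε := by
  set A : ℝ := 1 / (ε * Real.log 2) + 1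
  set B : ℕ := ⌈(2 : ℝ) ^ (1 / ε)⌉₊
  have hA : 1 ≤ A := le_add_of_nonneg_left (by positivity)
  refine ⟨A ^ B, by positivity, fun n hn => ?_⟩
  have hlocal : ∀ p ∈ n.primeFactors, (n.factorization p : ℝ) + 1 ≤
      (if p < B then A else 1) * ((p : ℝ) ^ n.factorization p) ^ ε := by
    intro p hp
    have hp2 : (2 : ℝ) ≤ p := by exact_mod_cast (Nat.prime_of_mem_primeFactors hp).two_le
    split_ifs with hpB
    · exact natCast_add_one_le_mul_rpow hp2 hε _
    · rw [one_mul]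
      exact natCast_add_one_le_rpow p.cast_nonneg (two_le_rpow_of_ceil_le hε (not_lt.1 hpB)) _
  have hsmall : ∏ p ∈ n.primeFactors, (if p < B then A else 1) ≤ A ^ B := by
    rw [prod_ite, prod_const, prod_const_one, mul_one]
    refine pow_le_pow_right₀ hA ?_
    calc #{p ∈ n.primeFactors | p < B} ≤ #(range B) :=
          card_le_card fun p hp => mem_range.2 (mem_filter.1 hp).2
      _ = B := card_range B
  have hfactor : ∏ p ∈ n.primeFactors, ((p : ℝ) ^ n.factorization p) ^ ε = (n : ℝ) ^ ε := by
    rw [Real.finsetProd_rpow _ _ fun _ _ => by positivity]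
    exact congrArg (· ^ ε) (by exact_mod_cast Nat.prod_factorization_pow_eq_self hn)
  calc (#n.divisors : ℝ) = ∏ p ∈ n.primeFactors, ((n.factorization p : ℝ) + 1) := by
        rw [Nat.card_divisors hn]; push_cast; rfl
    _ ≤ ∏ p ∈ n.primeFactors, (if p < B then A else 1) * ((p : ℝ) ^ n.factorization p) ^ ε :=
        prod_le_prod (fun _ _ => by positivity) hlocal
    _ = (∏ p ∈ n.primeFactors, if p < B then A else 1) * (n : ℝ) ^ ε := by
        rw [prod_mul_distrib, hfactor]
    _ ≤ A ^ B * (n : ℝ) ^ ε := by gcongr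

theorem card_finMulAntidiag_le (r n : ℕ) : #(Nat.finMulAntidiag r n) ≤ #n.divisors ^ r := by
  have hsub : Nat.finMulAntidiag r n ⊆ Fintype.piFinset fun _ => n.divisors :=
    fun _ ha => Fintype.mem_piFinset.2 fun i => Nat.mem_divisors.2
      ⟨Nat.dvd_of_mem_finMulAntidiag ha i, (Nat.mem_finMulAntidiag.1 ha).2⟩
  exact (card_le_card hsub).trans_eq (Fintype.card_piFinset_const _ r)

theorem exists_card_finMulAntidiag_le_rpow (r : ℕ) {ε : ℝ} (hε : 0 < ε) :
    ∃ C : ℝ, 0 ≤ C ∧ ∀ n : ℕ, (#(Nat.finMulAntidiag (r + 1) n) : ℝ) ≤ C * (n : ℝ) ^ ε := by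
  obtain ⟨C, hC, hdiv⟩ := exists_card_divisors_le_rpow (ε := ε / ((r + 1 : ℕ) : ℝ)) (by positivity)
  refine ⟨C ^ (r + 1), by positivity, fun n => ?_⟩
  rcases eq_or_ne n 0 with rfl | hn
  · rw [Nat.finMulAntidiag_zero_right, card_empty, Nat.cast_zero]
    positivity
  calc (#(Nat.finMulAntidiag (r + 1) n) : ℝ) ≤ (#n.divisors : ℝ) ^ (r + 1) := by
        exact_mod_cast card_finMulAntidiag_le (r + 1) n
    _ ≤ (C * (n : ℝ) ^ (ε / ((r + 1 : ℕ) : ℝ))) ^ (r + 1) := by gcongr; exact hdiv n hn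
    _ = C ^ (r + 1) * (n : ℝ) ^ ε := by
      rw [mul_pow, ← Real.rpow_mul_natCast (Nat.cast_nonneg n), div_mul_cancel₀ ε (by positivity)]

end DivisorBound

section CeilDiv

theorem natCast_ceilDiv_le (h d : ℕ) : ((h ⌈/⌉ d : ℕ) : ℝ) ≤ (h : ℝ) / d + 1 := by
  rcases d.eq_zero_or_pos with rfl | hd
  · simp
  have hle : h ⌈/⌉ d ≤ h / d + 1 := by
    rw [Nat.ceilDiv_eq_add_pred_div, ← Nat.add_div_right h hd]
    exact Nat.div_le_div_right (by omega)
  calc ((h ⌈/⌉ d : ℕ) : ℝ) ≤ ((h / d : ℕ) : ℝ) + 1 := by exact_mod_cast hle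
    _ ≤ (h : ℝ) / d + 1 := by gcongr; exact Nat.cast_div_le

theorem div_le_natCast_ceilDiv {d : ℕ} (hd : 0 < d) (h : ℕ) :
    (h : ℝ) / d ≤ ((h ⌈/⌉ d : ℕ) : ℝ) := by
  rw [div_le_iff₀' (by exact_mod_cast hd)]
  exact_mod_cast le_smul_ceilDiv (b := h) hd

theorem mem_Ioc_div_of_mul_mem_Ioc {d c x h : ℕ} (hd : 0 < d) (hc : d * c ∈ Ioc x (x + h)) :
    c ∈ Ioc (x / d) (x / d + h ⌈/⌉ d) := by
  obtain ⟨hlow, hupp⟩ := mem_Ioc.1 hc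
  refine mem_Ioc.2 ⟨(Nat.div_lt_iff_lt_mul hd).2 (by rwa [mul_comm]), ?_⟩
  have hx : x < d * (x / d + 1) := Nat.lt_mul_div_succ x hd
  have hh : h ≤ d * (h ⌈/⌉ d) := le_smul_ceilDiv hd
  have : d * c < d * (x / d + h ⌈/⌉ d + 1) := by nlinarith
  exact Nat.lt_succ_iff.1 (Nat.lt_of_mul_lt_mul_left this)

end CeilDiv

section HarmonicSums

theorem sum_Icc_inv_le_one_add_log (N : ℕ) : ∑ c ∈ Icc 1 N, (c : ℝ)⁻¹ ≤ 1 + Real.log N := by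
  have h := harmonic_le_one_add_log N
  rw [harmonic_eq_sum_Icc] at h
  simpa only [Rat.cast_sum, Rat.cast_inv, Rat.cast_natCast] using h

theorem sum_prod_inv_le_one_add_log_pow (s N : ℕ) :
    ∑ b ∈ Fintype.piFinset fun _ : Fin s => Icc 1 N, ∏ i, (b i : ℝ)⁻¹ ≤ (1 + Real.log N) ^ s := by
  rw [← sum_pow' (Icc 1 N) (fun c : ℕ => (c : ℝ)⁻¹) s]
  exact pow_le_pow_left₀ (sum_nonneg fun _ _ => by positivity) (sum_Icc_inv_le_one_add_log N) s

end HarmonicSums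

section TuplesProdIoc

/-- The `r`-tuples of positive integers whose product lies in `(y, y + h]`. -/
def tuplesProdIoc (r y h : ℕ) : Finset (Fin r → ℕ) :=
  (Ioc y (y + h)).biUnion (Nat.finMulAntidiag r)

variable {r s y h : ℕ}

theorem mem_tuplesProdIoc {a : Fin r → ℕ} :
    a ∈ tuplesProdIoc r y h ↔ ∏ i, a i ∈ Ioc y (y + h) := by
  simp only [tuplesProdIoc, mem_biUnion, Nat.mem_finMulAntidiag]
  refine ⟨fun ⟨_, hn, hprod, _⟩ => hprod ▸ hn, fun ha => ⟨_, ha, rfl, ?_⟩⟩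
  exact (pos_of_gt (mem_Ioc.1 ha).1).ne'

theorem tuplesProdIoc_subset_piFinset :
    tuplesProdIoc r y h ⊆ Fintype.piFinset fun _ => Icc 1 (y + h) := by
  intro a ha
  obtain ⟨hlow, hupp⟩ := mem_Ioc.1 (mem_tuplesProdIoc.1 ha)
  have hdvd : ∀ i, a i ∣ ∏ j, a j := fun i => dvd_prod_of_mem _ (mem_univ i)
  exact Fintype.mem_piFinset.2 fun i => mem_Icc.2
    ⟨Nat.pos_of_dvd_of_pos (hdvd i) (pos_of_gt hlow),
      (Nat.le_of_dvd (pos_of_gt hlow) (hdvd i)).trans hupp⟩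

theorem card_tuplesProdIoc_zero_le : #(tuplesProdIoc 0 y h) ≤ 1 := card_le_one_of_subsingleton _

theorem card_removeNth_fiber_le {b : Fin s → ℕ} (hb : ∀ j, 0 < b j) (i : Fin (s + 1)) :
    #{a ∈ tuplesProdIoc (s + 1) y h | i.removeNth a = b} ≤ h ⌈/⌉ ∏ j, b j := by
  have hpos : 0 < ∏ j, b j := Finset.prod_pos fun j _ => hb j
  calc #{a ∈ tuplesProdIoc (s + 1) y h | i.removeNth a = b}
      ≤ #(Ioc (y / ∏ j, b j) (y / ∏ j, b j + h ⌈/⌉ ∏ j, b j)) := by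
        refine card_le_card_of_injOn (fun a => a i) (fun a ha => ?_) fun a ha a' ha' hi => ?_
        · obtain ⟨hprod, rfl⟩ := mem_filter.1 ha
          rw [mem_tuplesProdIoc, Fin.prod_univ_succAbove _ i, mul_comm] at hprod
          exact mem_Ioc_div_of_mul_mem_Ioc hpos hprod
        · rw [← Fin.insertNth_self_removeNth i a, ← Fin.insertNth_self_removeNth i a',
            (mem_filter.1 ha).2, (mem_filter.1 ha').2]
          exact congrArg (fun c => (i.insertNth c b : Fin (s + 1) → ℕ)) hi
    _ = h ⌈/⌉ ∏ j, b j := by rw [Nat.card_Ioc, Nat.add_sub_cancel_left]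

theorem card_removeNth_fiber_le_mul_prod_inv {b : Fin s → ℕ} (hb : ∀ j, 0 < b j)
    (hbh : ∏ j, b j ≤ 2 * h) (i : Fin (s + 1)) :
    (#{a ∈ tuplesProdIoc (s + 1) y h | i.removeNth a = b} : ℝ) ≤ 3 * h * ∏ j, (b j : ℝ)⁻¹ := by
  have hpos : (0 : ℝ) < ∏ j, (b j : ℝ) := prod_pos fun j _ => by exact_mod_cast hb j
  have hone : (1 : ℝ) ≤ 2 * h / ∏ j, (b j : ℝ) := (one_le_div hpos).2 (by exact_mod_cast hbh)
  calc (#{a ∈ tuplesProdIoc (s + 1) y h | i.removeNth a = b} : ℝ)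
      ≤ ((h ⌈/⌉ ∏ j, b j : ℕ) : ℝ) := by exact_mod_cast card_removeNth_fiber_le hb i
    _ ≤ h / ∏ j, (b j : ℝ) + 1 := by exact_mod_cast natCast_ceilDiv_le h (∏ j, b j)
    _ ≤ h / ∏ j, (b j : ℝ) + 2 * h / ∏ j, (b j : ℝ) := by gcongr
    _ = 3 * h * ∏ j, (b j : ℝ)⁻¹ := by rw [prod_inv_distrib]; ring

theorem card_filter_prod_removeNth_le (s y h : ℕ) (i : Fin (s + 1)) :
    (#{a ∈ tuplesProdIoc (s + 1) y h | ∏ j, i.removeNth a j ≤ 2 * h} : ℝ) ≤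
      3 * h * (1 + Real.log ((y + h : ℕ) : ℝ)) ^ s := by
  set S := {a ∈ tuplesProdIoc (s + 1) y h | ∏ j, i.removeNth a j ≤ 2 * h}
  set P : Finset (Fin s → ℕ) := Fintype.piFinset fun _ => Icc 1 (y + h)
  have hS : ∀ a ∈ S, i.removeNth a ∈ P := fun a ha => Fintype.mem_piFinset.2 fun j =>
    Fintype.mem_piFinset.1 (tuplesProdIoc_subset_piFinset (mem_filter.1 ha).1) _
  have hfiber : ∀ b ∈ P, (#{a ∈ S | i.removeNth a = b} : ℝ) ≤ 3 * h * ∏ j, (b j : ℝ)⁻¹ := by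
    intro b hb
    by_cases hbh : ∏ j, b j ≤ 2 * h
    · have hbpos : ∀ j, 0 < b j := fun j => (mem_Icc.1 (Fintype.mem_piFinset.1 hb j)).1
      refine le_trans ?_ (card_removeNth_fiber_le_mul_prod_inv (y := y) hbpos hbh i)
      exact_mod_cast card_le_card (filter_subset_filter _ (filter_subset _ _))
    · have hempty : {a ∈ S | i.removeNth a = b} = ∅ :=
        filter_eq_empty_iff.2 fun a ha hab => hbh (hab ▸ (mem_filter.1 ha).2)
      rw [hempty, card_empty, Nat.cast_zero]
      positivity
  calc (#S : ℝ) = ∑ b ∈ P, (#{a ∈ S | i.removeNth a = b} : ℝ) := by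
        exact_mod_cast card_eq_sum_card_fiberwise hS
    _ ≤ ∑ b ∈ P, 3 * h * ∏ j, (b j : ℝ)⁻¹ := sum_le_sum hfiber
    _ ≤ 3 * h * (1 + Real.log ((y + h : ℕ) : ℝ)) ^ s := by
      rw [← mul_sum]
      gcongr
      exact sum_prod_inv_le_one_add_log_pow s (y + h)

theorem exists_prod_removeNth_le_two_mul (hyh : (max y h) ^ s ≤ h ^ (s + 1))
    {a : Fin (s + 1) → ℕ} (ha : a ∈ tuplesProdIoc (s + 1) y h) :
    ∃ i : Fin (s + 1), ∏ j, i.removeNth a j ≤ 2 * h := by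
  obtain ⟨i, -, hi⟩ := exists_max_image (univ : Finset (Fin (s + 1))) a univ_nonempty
  refine ⟨i, le_of_pow_le_pow_left₀ s.succ_ne_zero (Nat.zero_le _) ?_⟩
  set e := ∏ j, i.removeNth a j
  have hprod : a i * e ≤ y + h := by
    have h := (mem_Ioc.1 (mem_tuplesProdIoc.1 ha)).2
    rwa [Fin.prod_univ_succAbove _ i] at h
  have he : e ≤ a i ^ s :=
    calc e ≤ ∏ _j : Fin s, a i := prod_le_prod' fun j _ => hi _ (mem_univ _)
      _ = a i ^ s := by simp
  calc e ^ (s + 1) = e ^ s * e := pow_succ e s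
    _ ≤ e ^ s * a i ^ s := by gcongr
    _ = (a i * e) ^ s := by rw [mul_pow, mul_comm]
    _ ≤ (2 * max y h) ^ s := Nat.pow_le_pow_left (by omega) s
    _ = 2 ^ s * (max y h) ^ s := mul_pow ..
    _ ≤ 2 ^ (s + 1) * h ^ (s + 1) := by gcongr <;> omega
    _ = (2 * h) ^ (s + 1) := (mul_pow ..).symm

theorem card_tuplesProdIoc_succ_le (hyh : (max y h) ^ s ≤ h ^ (s + 1)) :
    (#(tuplesProdIoc (s + 1) y h) : ℝ) ≤
      (s + 1) * (3 * h * (1 + Real.log ((y + h : ℕ) : ℝ)) ^ s) := by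
  have hsub : tuplesProdIoc (s + 1) y h ⊆ univ.biUnion fun i : Fin (s + 1) =>
      {a ∈ tuplesProdIoc (s + 1) y h | ∏ j, i.removeNth a j ≤ 2 * h} := by
    intro a ha
    obtain ⟨i, hi⟩ := exists_prod_removeNth_le_two_mul hyh ha
    exact mem_biUnion.2 ⟨i, mem_univ i, mem_filter.2 ⟨ha, hi⟩⟩
  calc (#(tuplesProdIoc (s + 1) y h) : ℝ)
      ≤ ∑ i : Fin (s + 1),
          (#{a ∈ tuplesProdIoc (s + 1) y h | ∏ j, i.removeNth a j ≤ 2 * h} : ℝ) := by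
        exact_mod_cast (card_le_card hsub).trans card_biUnion_le
    _ ≤ ∑ _i : Fin (s + 1), 3 * h * (1 + Real.log ((y + h : ℕ) : ℝ)) ^ s :=
        sum_le_sum fun i _ => card_filter_prod_removeNth_le s y h i
    _ = (s + 1) * (3 * h * (1 + Real.log ((y + h : ℕ) : ℝ)) ^ s) := by simp

/-- If `h ^ (s + 1) < y ^ s` then `y < (y / h) ^ (s + 1)`, so the divisor bound costs only a small
power of `y / h`. -/
theorem exists_card_tuplesProdIoc_succ_le_rpow (s : ℕ) {ε : ℝ} (hε : 0 < ε) :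
    ∃ C : ℝ, 0 ≤ C ∧ ∀ y h : ℕ, 0 < h → h ^ (s + 1) < (max y h) ^ s →
      (#(tuplesProdIoc (s + 1) y h) : ℝ) ≤ C * h * ((y : ℝ) / h) ^ ε := by
  set δ : ℝ := ε / ((s + 1 : ℕ) : ℝ) with hδ
  have hδ0 : 0 < δ := by positivity
  obtain ⟨C, hC, hanti⟩ := exists_card_finMulAntidiag_le_rpow s hδ0
  refine ⟨C * 2 ^ δ, by positivity, fun y h hh hyh => ?_⟩
  have hhy : h < y := by
    by_contra! hle
    rw [max_eq_right hle] at hyh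
    exact hyh.not_ge (Nat.pow_le_pow_right hh s.le_succ)
  rw [max_eq_left hhy.le] at hyh
  have : (0 : ℝ) < h := by exact_mod_cast hh
  have hy : (y : ℝ) ≤ ((y : ℝ) / h) ^ (s + 1) := by
    rw [div_pow, le_div_iff₀ (by positivity), pow_succ' (y : ℝ)]
    gcongr
    exact_mod_cast hyh.le
  have hterm : ∀ n ∈ Ioc y (y + h),
      (#(Nat.finMulAntidiag (s + 1) n) : ℝ) ≤ C * 2 ^ δ * ((y : ℝ) / h) ^ ε := by
    intro n hn
    have hny : (n : ℝ) ≤ 2 * y := by exact_mod_cast (by have := mem_Ioc.1 hn; omega : n ≤ 2 * y)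
    calc (#(Nat.finMulAntidiag (s + 1) n) : ℝ) ≤ C * (n : ℝ) ^ δ := hanti n
      _ ≤ C * (2 * ((y : ℝ) / h) ^ (s + 1)) ^ δ := by
        gcongr; exact hny.trans (by gcongr)
      _ = C * 2 ^ δ * ((y : ℝ) / h) ^ ε := by
        rw [Real.mul_rpow zero_le_two (by positivity), ← Real.rpow_natCast_mul (by positivity), hδ,
          mul_div_cancel₀ ε (by positivity), mul_assoc]
  calc (#(tuplesProdIoc (s + 1) y h) : ℝ)
      ≤ ∑ n ∈ Ioc y (y + h), (#(Nat.finMulAntidiag (s + 1) n) : ℝ) := by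
        exact_mod_cast card_biUnion_le
    _ ≤ ∑ _n ∈ Ioc y (y + h), C * 2 ^ δ * ((y : ℝ) / h) ^ ε := sum_le_sum hterm
    _ = C * 2 ^ δ * h * ((y : ℝ) / h) ^ ε := by
      rw [sum_const, Nat.card_Ioc, Nat.add_sub_cancel_left, nsmul_eq_mul]; ring

end TuplesProdIoc

section LossFactor

/-- The factor lost against the expected order of magnitude `h` when counting tuples of bounded
length with product in `(y, y + h]`: a power of the logarithm when the interval is long, where the
largest entry can be chosen last, and a small power of `y / h` when it is short, where the divisor
bound is used. -/
noncomputable def lossFactor (n : ℕ) (ε : ℝ) (y h : ℕ) : ℝ :=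
  max ((1 + Real.log ((y + h : ℕ) : ℝ)) ^ n) (((y : ℝ) / h) ^ ε)

theorem one_le_one_add_log_natCast (N : ℕ) : 1 ≤ 1 + Real.log (N : ℝ) :=
  le_add_of_nonneg_right (Real.log_natCast_nonneg N)

theorem one_le_lossFactor (n : ℕ) (ε : ℝ) (y h : ℕ) : 1 ≤ lossFactor n ε y h :=
  (one_le_pow₀ (one_le_one_add_log_natCast _)).trans (le_max_left _ _)

theorem lossFactor_nonneg (n : ℕ) (ε : ℝ) (y h : ℕ) : 0 ≤ lossFactor n ε y h :=
  zero_le_one.trans (one_le_lossFactor n ε y h)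

theorem lossFactor_mono {n₁ n₂ : ℕ} (hn : n₁ ≤ n₂) (ε : ℝ) (y h : ℕ) :
    lossFactor n₁ ε y h ≤ lossFactor n₂ ε y h :=
  max_le_max_right _ (pow_le_pow_right₀ (one_le_one_add_log_natCast _) hn)

theorem lossFactor_pow (n m : ℕ) (ε : ℝ) (y h : ℕ) :
    lossFactor n ε y h ^ m = lossFactor (n * m) (ε * m) y h := by
  have hlog : 0 ≤ (1 + Real.log ((y + h : ℕ) : ℝ)) ^ n := by positivity
  have hpow : 0 ≤ ((y : ℝ) / h) ^ ε := by positivity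
  rw [lossFactor, (pow_left_monotoneOn (M₀ := ℝ) (n := m)).map_max hlog hpow, ← pow_mul,
    ← Real.rpow_mul_natCast (by positivity)]
  rfl

theorem lossFactor_div_le {d x H : ℕ} (hd : 0 < d) (hH : 0 < H) (n : ℕ) {ε : ℝ} (hε : 0 ≤ ε) :
    lossFactor n ε (x / d) (H ⌈/⌉ d) ≤ lossFactor n ε x H := by
  have hH0 : (0 : ℝ) < H := by exact_mod_cast hH
  have hd0 : (0 : ℝ) < d := by exact_mod_cast hd
  have hpos : (0 : ℝ) < ((H ⌈/⌉ d : ℕ) : ℝ) :=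
    (div_pos hH0 hd0).trans_le (div_le_natCast_ceilDiv hd H)
  have hle : x / d + H ⌈/⌉ d ≤ x + H :=
    add_le_add (x.div_le_self d) ((ceilDiv_le_iff_le_smul hd).2 (Nat.le_mul_of_pos_left H hd))
  have hlog : Real.log ((x / d + H ⌈/⌉ d : ℕ) : ℝ) ≤ Real.log ((x + H : ℕ) : ℝ) :=
    Real.log_le_log (by rw [Nat.cast_add]; positivity) (by exact_mod_cast hle)
  refine max_le_max (by gcongr) ?_
  refine Real.rpow_le_rpow (by positivity) ?_ hε
  calc ((x / d : ℕ) : ℝ) / ((H ⌈/⌉ d : ℕ) : ℝ) ≤ ((x : ℝ) / d) / ((H : ℝ) / d) := by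
        gcongr
        · exact Nat.cast_div_le
        · exact div_le_natCast_ceilDiv hd H
    _ = (x : ℝ) / H := div_div_div_cancel_right₀ hd0.ne' _ _

theorem exists_card_tuplesProdIoc_le (r : ℕ) {ε : ℝ} (hε : 0 < ε) :
    ∃ C : ℝ, 0 ≤ C ∧ ∀ y h : ℕ, 0 < h →
      (#(tuplesProdIoc r y h) : ℝ) ≤ C * h * lossFactor r ε y h := by
  rcases r with - | s
  · refine ⟨1, zero_le_one, fun y h hh => ?_⟩
    calc (#(tuplesProdIoc 0 y h) : ℝ) ≤ 1 := by exact_mod_cast card_tuplesProdIoc_zero_le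
      _ ≤ h := by exact_mod_cast hh
      _ ≤ 1 * h * lossFactor 0 ε y h := by
        rw [one_mul]; exact le_mul_of_one_le_right (Nat.cast_nonneg h) (one_le_lossFactor 0 ε y h)
  obtain ⟨C, hC, hshort⟩ := exists_card_tuplesProdIoc_succ_le_rpow s hε
  refine ⟨3 * (s + 1) + C, by positivity, fun y h hh => ?_⟩
  set L := lossFactor (s + 1) ε y h
  have hL : 0 ≤ L := lossFactor_nonneg _ _ _ _
  have hpow : (1 + Real.log ((y + h : ℕ) : ℝ)) ^ s ≤ L :=
    (le_max_left _ _).trans (lossFactor_mono s.le_succ ε y h)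
  have hrpow : ((y : ℝ) / h) ^ ε ≤ L := le_max_right _ _
  rcases le_or_gt ((max y h) ^ s) (h ^ (s + 1)) with hyh | hyh
  · calc (#(tuplesProdIoc (s + 1) y h) : ℝ)
        ≤ (s + 1) * (3 * h * (1 + Real.log ((y + h : ℕ) : ℝ)) ^ s) := card_tuplesProdIoc_succ_le hyh
      _ ≤ (s + 1) * (3 * h * L) := by gcongr
      _ = 3 * (s + 1) * h * L := by ring
      _ ≤ (3 * (s + 1) + C) * h * L := by gcongr; exact le_add_of_nonneg_right hC
  · calc (#(tuplesProdIoc (s + 1) y h) : ℝ) ≤ C * h * ((y : ℝ) / h) ^ ε := hshort y h hh hyh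
      _ ≤ C * h * L := by gcongr
      _ ≤ (3 * (s + 1) + C) * h * L := by gcongr; exact le_add_of_nonneg_left (by positivity)

theorem exists_card_tuplesProdIoc_div_le (r : ℕ) {ε : ℝ} (hε : 0 < ε) :
    ∃ C : ℝ, 0 ≤ C ∧ ∀ x H d : ℕ, 0 < d → d ≤ H →
      (#(tuplesProdIoc r (x / d) (H ⌈/⌉ d)) : ℝ) ≤ C * (H / d) * lossFactor r ε x H := by
  obtain ⟨C, hC, hcount⟩ := exists_card_tuplesProdIoc_le r hε
  refine ⟨C * 2, by positivity, fun x H d hd hdH => ?_⟩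
  have hd0 : (0 : ℝ) < d := by exact_mod_cast hd
  have hH : 0 < H := hd.trans_le hdH
  have hpos : (0 : ℝ) < ((H ⌈/⌉ d : ℕ) : ℝ) :=
    (div_pos (by exact_mod_cast hH) hd0).trans_le (div_le_natCast_ceilDiv hd H)
  have hceil : ((H ⌈/⌉ d : ℕ) : ℝ) ≤ 2 * (H / d) := by
    have hone : (1 : ℝ) ≤ H / d := (one_le_div hd0).2 (by exact_mod_cast hdH)
    linarith [natCast_ceilDiv_le H d]
  calc (#(tuplesProdIoc r (x / d) (H ⌈/⌉ d)) : ℝ)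
      ≤ C * ((H ⌈/⌉ d : ℕ) : ℝ) * lossFactor r ε (x / d) (H ⌈/⌉ d) :=
        hcount _ _ (by exact_mod_cast hpos)
    _ ≤ C * (2 * (H / d)) * lossFactor r ε x H := by
        gcongr
        · exact lossFactor_nonneg _ _ _ _
        · exact lossFactor_div_le hd hH r hε.le
    _ = C * 2 * (H / d) * lossFactor r ε x H := by ring

theorem exists_prod_card_tuplesProdIoc_div_le (k r : ℕ) {ε : ℝ} (hε : 0 < ε) :
    ∃ C : ℝ, 0 ≤ C ∧ ∀ (x H : ℕ) (d : Fin k → ℕ), (∀ j, 0 < d j) → (∀ j, d j ≤ H) →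
      (∏ j, #(tuplesProdIoc r (x / d j) (H ⌈/⌉ d j)) : ℝ) ≤
        C * (H * lossFactor r ε x H) ^ k * ∏ j, (d j : ℝ)⁻¹ := by
  obtain ⟨C, hC, hcount⟩ := exists_card_tuplesProdIoc_div_le r hε
  refine ⟨C ^ k, by positivity, fun x H d hd hdH => ?_⟩
  calc (∏ j, #(tuplesProdIoc r (x / d j) (H ⌈/⌉ d j)) : ℝ)
      ≤ ∏ j, C * (H * lossFactor r ε x H) * (d j : ℝ)⁻¹ :=
        prod_le_prod (fun _ _ => by positivity) fun j _ =>
          (hcount x H (d j) (hd j) (hdH j)).trans_eq (by ring)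
    _ = C ^ k * (H * lossFactor r ε x H) ^ k * ∏ j, (d j : ℝ)⁻¹ := by
        rw [prod_mul_distrib, prod_const, card_univ, Fintype.card_fin, mul_pow]

theorem sum_tuplesProdIoc_prod_inv_le_one_add_log_pow (k x H : ℕ) :
    ∑ d ∈ tuplesProdIoc k x H, ∏ j, (d j : ℝ)⁻¹ ≤ (1 + Real.log ((x + H : ℕ) : ℝ)) ^ k :=
  (sum_le_sum_of_subset_of_nonneg tuplesProdIoc_subset_piFinset fun _ _ _ => by positivity).trans
    (sum_prod_inv_le_one_add_log_pow k (x + H))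

theorem sum_tuplesProdIoc_prod_inv_le_card_div (k x H : ℕ) (hx : 0 < x) :
    ∑ d ∈ tuplesProdIoc k x H, ∏ j, (d j : ℝ)⁻¹ ≤ #(tuplesProdIoc k x H) / x := by
  have : (0 : ℝ) < x := by exact_mod_cast hx
  have hterm : ∀ d ∈ tuplesProdIoc k x H, ∏ j, (d j : ℝ)⁻¹ ≤ (x : ℝ)⁻¹ := by
    intro d hd
    rw [prod_inv_distrib]
    gcongr
    exact_mod_cast (mem_Ioc.1 (mem_tuplesProdIoc.1 hd)).1.le
  exact (sum_le_card_nsmul _ _ _ hterm).trans_eq (by rw [nsmul_eq_mul, div_eq_mul_inv])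

theorem exists_sum_tuplesProdIoc_prod_inv_le (k : ℕ) {ε : ℝ} (hε : 0 < ε) :
    ∃ C : ℝ, 0 ≤ C ∧ ∀ x H : ℕ, 0 < H →
      ∑ d ∈ tuplesProdIoc k x H, ∏ j, (d j : ℝ)⁻¹ ≤
        C * (H / ((max x H : ℕ) : ℝ)) * lossFactor k ε x H := by
  obtain ⟨C, hC, hcount⟩ := exists_card_tuplesProdIoc_le k hε
  refine ⟨C + 1, by positivity, fun x H hH => ?_⟩
  set L := lossFactor k ε x H
  have hL : 0 ≤ L := lossFactor_nonneg _ _ _ _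
  have hH0 : (0 : ℝ) < H := by exact_mod_cast hH
  rcases le_total H x with hHx | hxH
  · rw [max_eq_left hHx]
    calc ∑ d ∈ tuplesProdIoc k x H, ∏ j, (d j : ℝ)⁻¹ ≤ #(tuplesProdIoc k x H) / x :=
          sum_tuplesProdIoc_prod_inv_le_card_div k x H (hH.trans_le hHx)
      _ ≤ C * H * L / x := by gcongr; exact hcount x H hH
      _ = C * (H / x) * L := by ring
      _ ≤ (C + 1) * (H / x) * L := by gcongr; exact le_add_of_nonneg_right zero_le_one
  · rw [max_eq_right hxH, div_self hH0.ne', mul_one]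
    calc ∑ d ∈ tuplesProdIoc k x H, ∏ j, (d j : ℝ)⁻¹ ≤ (1 + Real.log ((x + H : ℕ) : ℝ)) ^ k :=
          sum_tuplesProdIoc_prod_inv_le_one_add_log_pow k x H
      _ ≤ L := le_max_left _ _
      _ ≤ (C + 1) * L := le_mul_of_one_le_left hL (le_add_of_nonneg_left hC)

end LossFactor

section DisjointPairs

theorem le_of_dvd_of_mem_Ioc {x H d n m : ℕ} (hdn : d ∣ n) (hdm : d ∣ m) (hne : n ≠ m)
    (hn : n ∈ Ioc x (x + H)) (hm : m ∈ Ioc x (x + H)) : d ≤ H := by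
  obtain ⟨hn1, hn2⟩ := mem_Ioc.1 hn
  obtain ⟨hm1, hm2⟩ := mem_Ioc.1 hm
  rcases lt_or_gt_of_ne hne with h | h
  · exact (Nat.le_of_dvd (by omega) (Nat.dvd_sub hdm hdn)).trans (by omega)
  · exact (Nat.le_of_dvd (by omega) (Nat.dvd_sub hdn hdm)).trans (by omega)

/-- In a common refinement of the two products the row `d` refining `n 0` is chosen first; the
`j`-th column then has product `m j ∈ (x, x + H]` and first entry `d j`, which divides the nonzero
difference `n 0 - m j` and hence is at most `H`. -/
theorem card_disjointPairs_succ_le (r x H : ℕ) :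
    #(disjointPairs (r + 1) (Ioc x (x + H))) ≤
      ∑ d ∈ tuplesProdIoc (r + 1) x H with ∀ j, d j ≤ H,
        ∏ j, #(tuplesProdIoc r (x / d j) (H ⌈/⌉ d j)) := by
  set Q := {d ∈ tuplesProdIoc (r + 1) x H | ∀ j, d j ≤ H}
  set R := Q.sigma fun d => Fintype.piFinset fun j => tuplesProdIoc r (x / d j) (H ⌈/⌉ d j)
  have hsub : disjointPairs (r + 1) (Ioc x (x + H)) ⊆ R.image fun q =>
      ((Fin.cons (∏ j, q.1 j) fun i => ∏ j, q.2 j i), fun j => q.1 j * ∏ i, q.2 j i) := by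
    rintro ⟨n, m⟩ hp
    obtain ⟨hsol, hdisj⟩ := mem_filter.1 hp
    obtain ⟨hn, hm, hprod⟩ := mem_equalProductPairs.1 hsol
    have hn0 : ∀ i, n i ≠ 0 := fun i => (pos_of_gt (mem_Ioc.1 (hn i)).1).ne'
    obtain ⟨A, hAn, hAm⟩ := exists_common_refinement_of_prod_eq_prod (fun i _ => hn0 i) hprod
    replace hAn : ∀ i, ∏ j, A i j = n i := fun i => hAn i (mem_univ i)
    have hsplit : ∀ j, A 0 j * ∏ i : Fin r, A i.succ j = m j := fun j => by
      rw [← Fin.prod_univ_succ fun i => A i j]; exact hAm j (mem_univ j)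
    have hdn : ∀ j, A 0 j ∣ n 0 := fun j => hAn 0 ▸ dvd_prod_of_mem _ (mem_univ j)
    have hdm : ∀ j, A 0 j ∣ m j := fun j => hsplit j ▸ dvd_mul_right _ _
    refine mem_image.2 ⟨⟨A 0, fun j i => A i.succ j⟩, mem_sigma.2 ⟨mem_filter.2 ⟨?_, ?_⟩, ?_⟩, ?_⟩
    · exact mem_tuplesProdIoc.2 (hAn 0 ▸ hn 0)
    · exact fun j => le_of_dvd_of_mem_Ioc (hdn j) (hdm j) (hdisj 0 j) (hn 0) (hm j)
    · refine Fintype.mem_piFinset.2 fun j => mem_tuplesProdIoc.2 ?_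
      refine mem_Ioc_div_of_mul_mem_Ioc (Nat.pos_of_dvd_of_pos (hdn j) (hn0 0).bot_lt) ?_
      exact (hsplit j).symm ▸ hm j
    · exact Prod.ext (funext (Fin.cases (hAn 0) fun i => hAn i.succ)) (funext hsplit)
  calc #(disjointPairs (r + 1) (Ioc x (x + H))) ≤ #R := (card_le_card hsub).trans card_image_le
    _ = ∑ d ∈ Q, ∏ j, #(tuplesProdIoc r (x / d j) (H ⌈/⌉ d j)) := by
      simp [R, card_sigma, Fintype.card_piFinset]

theorem exists_card_disjointPairs_succ_le (r : ℕ) {ε : ℝ} (hε : 0 < ε) :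
    ∃ C : ℝ, 0 ≤ C ∧ ∀ x H : ℕ, 0 < H →
      (#(disjointPairs (r + 1) (Ioc x (x + H))) : ℝ) ≤
        C * ((H : ℝ) ^ (r + 2) / ((max x H : ℕ) : ℝ)) *
          lossFactor ((r + 1) * (r + 2)) ε x H := by
  set δ := ε / ((r + 2 : ℕ) : ℝ) with hδ
  have hδ0 : 0 < δ := by positivity
  obtain ⟨C₁, hC₁, hprod⟩ := exists_prod_card_tuplesProdIoc_div_le (r + 1) r hδ0
  obtain ⟨C₂, hC₂, hsum⟩ := exists_sum_tuplesProdIoc_prod_inv_le (r + 1) hδ0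
  refine ⟨C₁ * C₂, by positivity, fun x H hH => ?_⟩
  set L := lossFactor (r + 1) δ x H
  have hL : 0 ≤ L := lossFactor_nonneg _ _ _ _
  have hLr : 0 ≤ lossFactor r δ x H := lossFactor_nonneg _ _ _ _
  set Q := {d ∈ tuplesProdIoc (r + 1) x H | ∀ j, d j ≤ H}
  have hterm : ∀ d ∈ Q, (∏ j, #(tuplesProdIoc r (x / d j) (H ⌈/⌉ d j)) : ℝ) ≤
      C₁ * (H * L) ^ (r + 1) * ∏ j, (d j : ℝ)⁻¹ := by
    intro d hd
    obtain ⟨hd, hdH⟩ := mem_filter.1 hd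
    have hdpos : ∀ j, 0 < d j := fun j =>
      (mem_Icc.1 (Fintype.mem_piFinset.1 (tuplesProdIoc_subset_piFinset hd) j)).1
    refine (hprod x H d hdpos hdH).trans ?_
    gcongr
    exact lossFactor_mono r.le_succ δ x H
  calc (#(disjointPairs (r + 1) (Ioc x (x + H))) : ℝ)
      ≤ ∑ d ∈ Q, (∏ j, #(tuplesProdIoc r (x / d j) (H ⌈/⌉ d j)) : ℝ) := by
        exact_mod_cast card_disjointPairs_succ_le r x H
    _ ≤ ∑ d ∈ Q, C₁ * (H * L) ^ (r + 1) * ∏ j, (d j : ℝ)⁻¹ := sum_le_sum hterm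
    _ ≤ C₁ * (H * L) ^ (r + 1) * (C₂ * (H / ((max x H : ℕ) : ℝ)) * L) := by
        rw [← mul_sum]
        gcongr
        exact (sum_le_sum_of_subset_of_nonneg (filter_subset _ _) fun _ _ _ => by positivity).trans
          (hsum x H hH)
    _ = C₁ * C₂ * ((H : ℝ) ^ (r + 2) / ((max x H : ℕ) : ℝ)) * L ^ (r + 2) := by ring
    _ = _ := by rw [lossFactor_pow, hδ, div_mul_cancel₀ ε (by positivity)]

end DisjointPairs

section NonPermPairs

theorem exists_card_nonPermPairs_le (k : ℕ) {ε : ℝ} (hε : 0 < ε) :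
    ∃ C : ℝ, 0 ≤ C ∧ ∀ x H : ℕ, 0 < H →
      (#(nonPermPairs k (Ioc x (x + H))) : ℝ) ≤
        C * ((H : ℝ) ^ (k + 1) / ((max x H : ℕ) : ℝ)) * lossFactor (k * (k + 1)) ε x H := by
  induction k with
  | zero =>
    refine ⟨0, le_rfl, fun x H _ => ?_⟩
    have hempty : nonPermPairs 0 (Ioc x (x + H)) = ∅ :=
      filter_eq_empty_iff.2 fun p _ => not_not.2 ⟨1, Subsingleton.elim _ _⟩
    simp [hempty]
  | succ l ih =>
    obtain ⟨C₁, hC₁, hnonperm⟩ := ih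
    obtain ⟨C₂, hC₂, hdisj⟩ := exists_card_disjointPairs_succ_le l hε
    refine ⟨C₂ + (l + 1) ^ 2 * C₁, by positivity, fun x H hH => ?_⟩
    set M : ℝ := ((max x H : ℕ) : ℝ)
    set L := lossFactor ((l + 1) * (l + 2)) ε x H
    have hmono : lossFactor (l * (l + 1)) ε x H ≤ L :=
      lossFactor_mono (by gcongr <;> omega) ε x H
    have hcard : (#(nonPermPairs (l + 1) (Ioc x (x + H))) : ℝ) ≤
        #(disjointPairs (l + 1) (Ioc x (x + H))) +
          (l + 1) ^ 2 * H * #(nonPermPairs l (Ioc x (x + H))) := by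
      have h := card_nonPermPairs_succ_le (S := Ioc x (x + H)) (by simp) l
      rw [Nat.card_Ioc, Nat.add_sub_cancel_left] at h
      exact_mod_cast h
    calc (#(nonPermPairs (l + 1) (Ioc x (x + H))) : ℝ)
        ≤ C₂ * (H ^ (l + 2) / M) * L + (l + 1) ^ 2 * H * (C₁ * (H ^ (l + 1) / M) * L) := by
          refine hcard.trans ?_
          gcongr
          · exact hdisj x H hH
          · exact (hnonperm x H hH).trans (by gcongr)
      _ = (C₂ + (l + 1) ^ 2 * C₁) * (H ^ (l + 1 + 1) / M) * L := by ring

theorem one_add_log_add_le {x H : ℕ} (hx : 1 ≤ x) (hH : 2 ≤ H) :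
    1 + Real.log ((x + H : ℕ) : ℝ) ≤ 4 * (Real.log x + Real.log H) := by
  have hx1 : (1 : ℝ) ≤ x := by exact_mod_cast hx
  have hH2 : (2 : ℝ) ≤ H := by exact_mod_cast hH
  have hsum : Real.log ((x + H : ℕ) : ℝ) ≤ Real.log 2 + (Real.log x + Real.log H) := by
    rw [← Real.log_mul (by positivity) (by positivity),
      ← Real.log_mul (by positivity) (by positivity)]
    refine Real.log_le_log (by positivity) ?_
    push_cast
    nlinarith
  linarith [Real.log_le_log two_pos hH2, Real.log_nonneg hx1, Real.log_two_gt_d9]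

theorem lossFactor_half_le (n : ℕ) {x H : ℕ} (hx : 1 ≤ x) (hH : 2 ≤ H) :
    lossFactor n (1 / 2) x H ≤
      4 ^ n * (√((max x H : ℕ) : ℝ) / √(H : ℝ) + (Real.log x + Real.log H) ^ n) := by
  have hpow : (1 + Real.log ((x + H : ℕ) : ℝ)) ^ n ≤ 4 ^ n * (Real.log x + Real.log H) ^ n := by
    rw [← mul_pow]
    exact pow_le_pow_left₀ (by positivity) (one_add_log_add_le hx hH) n
  have hsqrt : ((x : ℝ) / H) ^ (1 / 2 : ℝ) ≤ 4 ^ n * (√((max x H : ℕ) : ℝ) / √(H : ℝ)) := by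
    rw [← Real.sqrt_eq_rpow, Real.sqrt_div x.cast_nonneg]
    refine le_trans ?_ (le_mul_of_one_le_left (by positivity) (one_le_pow₀ (by norm_num)))
    gcongr
    exact le_max_left x H
  rw [mul_add, add_comm]
  exact (max_le_add_of_nonneg (by positivity) (by positivity)).trans (add_le_add hpow hsqrt)

theorem exists_card_nonPermPairs_le_sqrt_add_log (k : ℕ) :
    ∃ C : ℝ, 0 ≤ C ∧ ∀ x H : ℕ, 1 ≤ x → 1 ≤ H →
      (#(nonPermPairs k (Ioc x (x + H))) : ℝ) ≤
        C * ((H : ℝ) ^ k * √(H : ℝ) / √((max x H : ℕ) : ℝ)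
          + (H : ℝ) ^ (k + 1) * (Real.log x + Real.log H) ^ (2 * k ^ 2 + 2)
              / ((max x H : ℕ) : ℝ)) := by
  obtain ⟨C, hC, hcount⟩ := exists_card_nonPermPairs_le k one_half_pos
  set N := 2 * k ^ 2 + 2 with hN
  refine ⟨C * 4 ^ N, by positivity, fun x H hx hH => ?_⟩
  set M : ℝ := ((max x H : ℕ) : ℝ)
  set ℓ := Real.log x + Real.log H
  have hℓ : 0 ≤ ℓ := add_nonneg (Real.log_natCast_nonneg x) (Real.log_natCast_nonneg H)
  rcases hH.eq_or_lt with rfl | hH2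
  · rw [Nat.Ioc_succ_singleton, nonPermPairs_singleton, card_empty, Nat.cast_zero]
    positivity
  have hloss : lossFactor (k * (k + 1)) (1 / 2) x H ≤ 4 ^ N * (√M / √(H : ℝ) + ℓ ^ N) :=
    (lossFactor_mono (by nlinarith) _ x H).trans (lossFactor_half_le N hx hH2)
  have hsqrt : (H : ℝ) ^ (k + 1) / M * (√M / √(H : ℝ)) = (H : ℝ) ^ k * √(H : ℝ) / √M :=
    calc (H : ℝ) ^ (k + 1) / M * (√M / √(H : ℝ)) = H ^ k * (H / √(H : ℝ)) * (√M / M) := by ring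
      _ = H ^ k * √(H : ℝ) / √M := by rw [Real.div_sqrt, Real.sqrt_div_self, div_eq_mul_inv]
  calc (#(nonPermPairs k (Ioc x (x + H))) : ℝ)
      ≤ C * (H ^ (k + 1) / M) * (4 ^ N * (√M / √(H : ℝ) + ℓ ^ N)) :=
        (hcount x H hH).trans (by gcongr)
    _ = C * 4 ^ N * (H ^ k * √(H : ℝ) / √M + H ^ (k + 1) * ℓ ^ N / M) := by rw [← hsqrt]; ring

end NonPermPairs

theorem eqProdCount_eq_card_equalProductPairs (k x H : ℕ) :
    eqProdCount k x H = #(equalProductPairs k (Ioc x (x + H))) :=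
  Nat.subtype_card _ fun _ => mem_equalProductPairs

end EqualProducts

/-- for every `k ≥ 1` there is `C_k > 0` such that for all integers
`x, H ≥ 1`, the number of solutions of `n₁⋯n_k = n_{k+1}⋯n_{2k}` in `(x, x+H]^{2k}`
differs from `k!·H^k` by at most
`C_k · (H^{k−1} + H^{k+1/2}/max(x,H)^{1/2} + H^{k+1}·(log x + log H)^{2k²+2}/max(x,H))`. -/
theorem stmt1 (k : ℕ) (hk : 1 ≤ k) :
    ∃ C : ℝ, 0 < C ∧ ∀ x H : ℕ, 1 ≤ x → 1 ≤ H →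
      |(eqProdCount k x H : ℝ) - (k.factorial : ℝ) * (H : ℝ) ^ k| ≤
        C * ((H : ℝ) ^ (k - 1)
          + (H : ℝ) ^ k * Real.sqrt (H : ℝ) / Real.sqrt ((max x H : ℕ) : ℝ)
          + (H : ℝ) ^ (k + 1) * (Real.log x + Real.log H) ^ (2 * k ^ 2 + 2)
              / ((max x H : ℕ) : ℝ)) := by
  obtain ⟨C, hC, hnonperm⟩ := EqualProducts.exists_card_nonPermPairs_le_sqrt_add_log k
  refine ⟨k.factorial * k.choose 2 + C + 1, by positivity, fun x H hx hH => ?_⟩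
  have hmain := EqualProducts.abs_card_equalProductPairs_sub_le k (Finset.Ioc x (x + H))
  rw [← EqualProducts.eqProdCount_eq_card_equalProductPairs, Nat.card_Ioc,
    Nat.add_sub_cancel_left] at hmain
  set A : ℝ := k.factorial * k.choose 2
  set P : ℝ := (H : ℝ) ^ (k - 1)
  set Q : ℝ := (H : ℝ) ^ k * √(H : ℝ) / √((max x H : ℕ) : ℝ)
  set R : ℝ := (H : ℝ) ^ (k + 1) * (Real.log x + Real.log H) ^ (2 * k ^ 2 + 2) /
    ((max x H : ℕ) : ℝ)
  have : 0 ≤ Real.log x + Real.log H :=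
    add_nonneg (Real.log_natCast_nonneg x) (Real.log_natCast_nonneg H)
  have hA : 0 ≤ A := by positivity
  have : 0 ≤ P := by positivity
  have : 0 ≤ Q + R := by positivity
  calc |(eqProdCount k x H : ℝ) - k.factorial * (H : ℝ) ^ k| ≤ A * P + C * (Q + R) :=
        hmain.trans (by gcongr; exact hnonperm x H hx hH)
    _ ≤ (A + C + 1) * P + (A + C + 1) * (Q + R) := by gcongr <;> linarith
    _ = (A + C + 1) * (P + Q + R) := by ring
end
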